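/- Let H be an algebraic extension of the field of rational numbers. Then the set of elements of H that can be written as a sum of four squares of elements of H, i.e. {x ∈ H | ∃ x₁,x₂,x₃,x₄ ∈ H, x = x₁² + x₂² + x₃² + x₄²}, is exactly the set of x ∈ H such that for every field embedding σ : H → ℝ one has σ(x) ≥ 0. -/

import Mathlib

/-!
Let `x` be nonnegative at every real embedding of `H`. Orderings of an algebraic extension of `ℚ`
are archimedean, hence come from real embeddings, so by Artin's theorem `x` is a sum of squares,
already in some number field `K ⊆ H`.

Let `a ≠ 0` be a sum of squares in `K`. The Chinese remainder theorem provides `s = 1 + y² + z²`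
such that `d = a * s` has odd valuation at every prime at which `2` or `3` has odd valuation. Then
`L = K(√-d)` is totally complex, and `2` and `3` have even valuation at all primes of `L`. Over `L`
the element `-2` is a norm from `L(√-3)`; writing `-2 = α² + 3β²` gives
`α² + (β + 1)² + (β - 1)² + β² = 0`, so the norm form of the quaternions is isotropic over `L`.
This forces `d`, and with it `a = d / s`, to be a sum of four squares in `K`.

That `-2` is a norm is a case of the Hasse norm theorem. As in the proof of the first and second
inequalities of class field theory it comes from comparing indices in groups of `S`-units: there
are `2 ^ (#S + #(infinite places))` classes of `S`-units modulo squares, while the product of the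
local indices of squares is at most `4 ^ #S * 2 ^ [K : ℚ]`. Auxiliary primes to enlarge `S` exist
because a non-square stays a non-square at infinitely many primes, by counting ideals of bounded
norm.
-/

namespace FourSquares

/-! ### Indices of subgroups -/

section GroupIndices

variable {G ι : Type*} [CommGroup G]

lemma relIndex_dvd_two_iff_mul_mem {H U : Subgroup G} :
    H.relIndex U ∣ 2 ↔ ∀ x ∈ U, ∀ y ∈ U, x ∉ H → y ∉ H → x * y ∈ H := by
  rw [Subgroup.relIndex_dvd_two_iff]
  constructor
  · rintro ⟨a, _, ha⟩ x hx y hy hxH hyH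
    have hxa : x * a ∈ H := (ha x hx).resolve_right hxH
    have hya : y⁻¹ * a ∈ H :=
      (ha y⁻¹ (U.inv_mem hy)).resolve_right (mt H.inv_mem_iff.1 hyH)
    convert H.mul_mem hxa (H.inv_mem hya) using 1
    rw [mul_inv_rev, inv_inv, mul_assoc, mul_inv_cancel_left]
  · intro h
    by_cases hU : U ≤ H
    · exact ⟨1, U.one_mem, fun b hb => Or.inr (hU hb)⟩
    · obtain ⟨a, ha, haH⟩ := SetLike.not_le_iff_exists.1 hU
      exact ⟨a, ha, fun b hb => or_iff_not_imp_right.2 fun hbH => h b hb a ha hbH haH⟩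

lemma relIndex_inf_dvd (H K U : Subgroup G) :
    (H ⊓ K).relIndex U ∣ H.relIndex U * K.relIndex U := by
  rw [← Subgroup.relIndex_inf_mul_relIndex, ← Subgroup.inf_relIndex_right H U]
  refine mul_dvd_mul_right ?_ _
  rw [Subgroup.inf_relIndex_right, ← Subgroup.relIndex_subgroupOf (inf_le_right : K ⊓ U ≤ U)]
  exact Subgroup.relIndex_dvd_index_of_normal _ _

lemma relIndex_iInf_dvd_two_pow (T : Finset ι) (F : ι → Subgroup G) (U : Subgroup G)
    (h : ∀ i ∈ T, (F i).relIndex U ∣ 2) : (⨅ i ∈ T, F i).relIndex U ∣ 2 ^ T.card := by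
  classical
  induction T using Finset.induction_on with
  | empty => simp
  | insert a T ha ih =>
    rw [Finset.iInf_insert, Finset.card_insert_of_notMem ha, pow_succ']
    exact (relIndex_inf_dvd _ _ _).trans (mul_dvd_mul (h a (Finset.mem_insert_self a T))
      (ih fun i hi => h i (Finset.mem_insert_of_mem hi)))

lemma two_pow_card_le_relIndex (T : Finset ι) (F : ι → Subgroup G) {U V : Subgroup G}
    (hV : ∀ i ∈ T, V ≤ F i) (h : ∀ η : ι → Prop, ∃ x ∈ U, ∀ i ∈ T, (x ∈ F i ↔ η i))
    (h₀ : V.relIndex U ≠ 0) : 2 ^ T.card ≤ V.relIndex U := by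
  classical
  have : Finite (U ⧸ V.subgroupOf U) := Nat.finite_of_card_ne_zero h₀
  let pattern : U ⧸ V.subgroupOf U → Set T := Quotient.lift (fun x => {i | (x : G) ∈ F i})
    fun x y hxy => by
      ext i
      have hi : (x : G)⁻¹ * y ∈ F i :=
        hV i i.2 (QuotientGroup.leftRel_apply (s := V.subgroupOf U).1 hxy)
      simpa using ((F i).mul_mem_cancel_right (y := (x : G)) hi).symm
  have hpattern : Function.Surjective pattern := fun A => by
    obtain ⟨x, hx, hxA⟩ := h fun i => ∃ hi : i ∈ T, ⟨i, hi⟩ ∈ A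
    refine ⟨QuotientGroup.mk ⟨x, hx⟩, Set.ext fun i => (hxA i i.2).trans ?_⟩
    simp
  calc 2 ^ T.card = Nat.card (Set T) := by simp
    _ ≤ V.relIndex U := Nat.card_le_card_of_surjective pattern hpattern

lemma inf_le_of_relIndex_mul_two_le {S E U N : Subgroup G} (hSE : S ≤ E) (hS₀ : S.index ≠ 0)
    (hS : S.index ≤ 2 * S.relIndex U) (hNE : N ≤ E) (hN₀ : N.relIndex U ≠ 0)
    (hN : N.relIndex U * 2 ≤ E.index) : E ⊓ U ≤ N := by
  have hSU : S.relIndex U * (S ⊔ U).index = S.index := by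
    rw [← Subgroup.relIndex_mul_index (le_sup_left : S ≤ S ⊔ U), Subgroup.relIndex_sup_left]
  have hEU : E.relIndex U * (E ⊔ U).index = E.index := by
    rw [← Subgroup.relIndex_mul_index (le_sup_left : E ≤ E ⊔ U), Subgroup.relIndex_sup_left]
  have hNEU : N.relIndex (E ⊓ U) * E.relIndex U = N.relIndex U := by
    rw [Subgroup.relIndex_inf_mul_relIndex, inf_eq_left.2 hNE]
  have hsup₀ : (S ⊔ U).index ≠ 0 := right_ne_zero_of_mul (hSU ▸ hS₀)
  have hsup : (E ⊔ U).index ≤ 2 := by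
    refine (Nat.le_of_dvd (Nat.pos_of_ne_zero hsup₀)
      (Subgroup.index_dvd_of_le (sup_le_sup_right hSE U))).trans ?_
    refine Nat.le_of_mul_le_mul_left (c := S.relIndex U) ?_
      (Nat.pos_of_ne_zero (left_ne_zero_of_mul (hSU ▸ hS₀)))
    lia
  rw [← hNEU] at hN hN₀
  have hNE_le : N.relIndex (E ⊓ U) * 2 ≤ 1 * 2 := by
    refine Nat.le_of_mul_le_mul_left (c := E.relIndex U) ?_
      (Nat.pos_of_ne_zero (right_ne_zero_of_mul hN₀))
    calc E.relIndex U * (N.relIndex (E ⊓ U) * 2) ≤ E.relIndex U * (E ⊔ U).index := by lia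
      _ ≤ E.relIndex U * (1 * 2) := by gcongr
  have := left_ne_zero_of_mul hN₀
  exact Subgroup.relIndex_eq_one.1 (by lia)

end GroupIndices

section SquareIndex

variable {G H : Type*} [CommGroup G] [CommGroup H]

lemma index_square_congr (e : G ≃* H) : (Subgroup.square G).index = (Subgroup.square H).index := by
  rw [← Subgroup.index_comap_of_surjective (Subgroup.square H) (f := e.toMonoidHom) e.surjective]
  congr 1
  ext x
  exact ⟨IsSquare.map e, fun h => by simpa using h.map e.symm⟩

lemma index_square_prod :
    (Subgroup.square (G × H)).index = (Subgroup.square G).index * (Subgroup.square H).index := by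
  rw [← Subgroup.index_prod]
  congr 1
  ext x
  simp [Subgroup.mem_prod, isSquare_iff_exists_sq, Prod.ext_iff]

lemma index_square_pi (ι : Type*) [Fintype ι] :
    (Subgroup.square (ι → G)).index = (Subgroup.square G).index ^ Fintype.card ι := by
  have h : Subgroup.square (ι → G) = Subgroup.pi Set.univ fun _ => Subgroup.square G := by
    ext x
    simp [Subgroup.mem_pi, isSquare_iff_exists_sq, funext_iff, Classical.skolem]
  simp [h, Subgroup.index_pi]

lemma index_square_multiplicative_int : (Subgroup.square (Multiplicative ℤ)).index = 2 := by
  refine Subgroup.index_eq_two_iff.2 ⟨Multiplicative.ofAdd 1, fun b => ?_⟩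
  obtain ⟨n, rfl⟩ := Multiplicative.ofAdd.surjective b
  rw [← ofAdd_add, Subgroup.mem_square, Subgroup.mem_square, isSquare_ofAdd_iff,
    isSquare_ofAdd_iff, Int.even_add_one, xor_not_left]

lemma index_range_mul_index_square_mul_two_le (j : G →* H) (N : H →* G)
    (hNj : ∀ x, N (j x) = x ^ 2)
    (hN : ∀ y, IsSquare (N y) → y ∈ j.range ⊔ Subgroup.square H)
    {u : G} (hu : ¬ IsSquare u) (hju : IsSquare (j u)) (h₀ : (Subgroup.square G).index ≠ 0) :
    N.range.index * (Subgroup.square H).index * 2 ≤ (Subgroup.square G).index ^ 2 := by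
  set C : Subgroup G := (Subgroup.square H).comap j
  set W : Subgroup H := j.range ⊔ Subgroup.square H
  have hGN : (Subgroup.square G).relIndex N.range * N.range.index = (Subgroup.square G).index := by
    refine Subgroup.relIndex_mul_index fun x hx => ?_
    obtain ⟨y, rfl⟩ := (isSquare_iff_exists_sq x).1 hx
    exact ⟨j y, hNj y⟩
  have hGC : (Subgroup.square G).relIndex C * C.index = (Subgroup.square G).index :=
    Subgroup.relIndex_mul_index fun x hx => IsSquare.map j hx
  have hH : C.index * W.index = (Subgroup.square H).index := by
    rw [Subgroup.index_comap, ← Subgroup.relIndex_sup_right]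
    exact Subgroup.relIndex_mul_index le_sup_right
  have hW : W.index ≤ (Subgroup.square G).relIndex N.range := by
    refine Nat.le_of_dvd (Nat.pos_of_ne_zero (left_ne_zero_of_mul (hGN ▸ h₀))) ?_
    rw [← Subgroup.index_comap]
    exact Subgroup.index_dvd_of_le hN
  have hC : 2 ≤ (Subgroup.square G).relIndex C := by
    have hC₀ : (Subgroup.square G).relIndex C ≠ 0 := left_ne_zero_of_mul (hGC ▸ h₀)
    have hC₁ : (Subgroup.square G).relIndex C ≠ 1 := fun h =>
      hu (Subgroup.relIndex_eq_one.1 h hju)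
    lia
  calc N.range.index * (Subgroup.square H).index * 2
      = (W.index * N.range.index) * (2 * C.index) := by rw [← hH]; ring
    _ ≤ ((Subgroup.square G).relIndex N.range * N.range.index) *
        ((Subgroup.square G).relIndex C * C.index) := by gcongr
    _ = (Subgroup.square G).index ^ 2 := by rw [hGN, hGC, sq]

end SquareIndex

/-! ### Orderings and sums of squares -/

section Orderings

variable {F : Type*} [Field F]

lemma exists_le_neg_mem (P : RingPreordering F) {x : F} (hx : x ∉ P) :
    ∃ Q, P ≤ Q ∧ -x ∈ Q := by
  refine ⟨RingPreordering.mk' {z | ∃ s ∈ P, ∃ t ∈ P, z = s - x * t} ?_ ?_ ?_ ?_, ?_, ?_⟩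
  · rintro _ _ ⟨s, hs, t, ht, rfl⟩ ⟨s', hs', t', ht', rfl⟩
    exact ⟨s + s', add_mem hs hs', t + t', add_mem ht ht', by ring⟩
  · rintro _ _ ⟨s, hs, t, ht, rfl⟩ ⟨s', hs', t', ht', rfl⟩
    exact ⟨s * s' + x ^ 2 * (t * t'),
      add_mem (mul_mem hs hs') (mul_mem (P.pow_two_mem x) (mul_mem ht ht')),
      s * t' + s' * t, add_mem (mul_mem hs ht') (mul_mem hs' ht), by ring⟩
  · exact fun y => ⟨y * y, P.mul_self_mem y, 0, zero_mem P, by ring⟩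
  · rintro ⟨s, hs, t, ht, h⟩
    have ht₀ : t ≠ 0 := by
      rintro rfl
      rw [mul_zero, sub_zero] at h
      exact P.neg_one_notMem (h ▸ hs)
    have hxt : x = (1 + s) * t⁻¹ := by
      field_simp
      linear_combination h
    exact hx (hxt ▸ mul_mem (add_mem (one_mem P) hs) (RingPreordering.inv_mem ht))
  · exact fun y hy => ⟨y, hy, 0, zero_mem P, by ring⟩
  · exact ⟨0, zero_mem P, 1, one_mem P, by ring⟩

lemma exists_le_hasMemOrNegMem (P : RingPreordering F) :
    ∃ Q, P ≤ Q ∧ HasMemOrNegMem Q := by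
  obtain ⟨M, hPM, hM⟩ := zorn_le_nonempty_Ici₀ P (fun c _ hc Q₀ hQ₀ => by
    refine ⟨RingPreordering.mk' {z | ∃ Q ∈ c, z ∈ Q} ?_ ?_ ?_ ?_, fun Q hQ x hx => ⟨Q, hQ, hx⟩⟩
    · rintro a b ⟨Q, hQ, ha⟩ ⟨R, hR, hb⟩
      obtain ⟨T, hT, hQT, hRT⟩ := hc.directedOn Q hQ R hR
      exact ⟨T, hT, add_mem (hQT ha) (hRT hb)⟩
    · rintro a b ⟨Q, hQ, ha⟩ ⟨R, hR, hb⟩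
      obtain ⟨T, hT, hQT, hRT⟩ := hc.directedOn Q hQ R hR
      exact ⟨T, hT, mul_mem (hQT ha) (hRT hb)⟩
    · exact fun x => ⟨Q₀, hQ₀, Q₀.mul_self_mem x⟩
    · exact fun ⟨Q, _, h⟩ => Q.neg_one_notMem h) P le_rfl
  refine ⟨M, hPM, ⟨fun x => or_iff_not_imp_left.2 fun hx => ?_⟩⟩
  obtain ⟨Q, hQ, hxQ⟩ := exists_le_neg_mem M hx
  exact hM hQ hxQ

/-- Artin's theorem. -/
lemma isSumSq_of_forall_linearOrder_nonneg [NeZero (2 : F)] {x : F}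
    (hx : ∀ (_ : LinearOrder F) (_ : IsStrictOrderedRing F), 0 ≤ x) : IsSumSq x := by
  classical
  by_contra hxs
  have h₁ : ¬ IsSumSq (-1 : F) := fun h₁ => hxs (by
    have h₂ : (2 : F) ≠ 0 := two_ne_zero
    have h : x = (x + 1) / 2 * ((x + 1) / 2) + -1 * ((x - 1) / 2 * ((x - 1) / 2)) := by
      field_simp
      ring
    rw [h]
    exact (IsSumSq.mul_self _).add (h₁.mul (IsSumSq.mul_self _)))
  let sums : RingPreordering F := RingPreordering.mk' {z | IsSumSq z} (fun a b => a.add b)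
    (fun a b => a.mul b) (fun a => IsSumSq.mul_self a) h₁
  obtain ⟨Q, -, hxQ⟩ := exists_le_neg_mem sums hxs
  obtain ⟨M, hQM, hM⟩ := exists_le_hasMemOrNegMem Q
  let C : RingCone F := { M.toSubsemiring with
    eq_zero_of_mem_of_neg_mem' := fun h h' =>
      RingPreordering.eq_zero_of_mem_of_neg_mem (P := M) h h' }
  have : HasMemOrNegMem C := ⟨hM.mem_or_neg_mem⟩
  let _ : LinearOrder F := LinearOrder.mkOfAddGroupCone C
  have : IsOrderedRing F := IsOrderedRing.mkOfCone C
  have h₀ : 0 ≤ x := hx _ (IsOrderedRing.toIsStrictOrderedRing F)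
  have h₀' : x ≤ 0 := by
    change 0 - x ∈ C
    rw [zero_sub]
    exact hQM hxQ
  exact hxs (le_antisymm h₀ h₀' ▸ IsSumSq.zero)

section Archimedean

variable {F E : Type*} [Field F] [LinearOrder F] [IsStrictOrderedRing F] [Field E] [LinearOrder E]
  [IsStrictOrderedRing E] [Algebra F E]

lemma exists_le_algebraMap_of_isIntegral (h : Monotone (algebraMap F E)) {x : E}
    (hx : IsIntegral F x) : ∃ c : F, x ≤ algebraMap F E c := by
  rcases le_or_gt x 1 with hx₁ | hx₁
  · exact ⟨1, by simpa using hx₁⟩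
  obtain ⟨n, hn⟩ := Nat.exists_eq_add_one.2 (minpoly.natDegree_pos hx)
  let c : F := ∑ i ∈ Finset.range (n + 1), |(minpoly F x).coeff i|
  have hroot : x ^ (n + 1) +
      ∑ i ∈ Finset.range (n + 1), algebraMap F E ((minpoly F x).coeff i) * x ^ i = 0 := by
    have h₀ := minpoly.aeval F x
    rw [(minpoly.monic hx).as_sum, hn] at h₀
    simpa using h₀
  have hpow : x * x ^ n ≤ algebraMap F E c * x ^ n := by
    rw [← pow_succ', eq_neg_of_add_eq_zero_left hroot, map_sum, Finset.sum_mul,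
      ← Finset.sum_neg_distrib]
    refine Finset.sum_le_sum fun i hi => ?_
    rw [← neg_mul, ← map_neg]
    gcongr
    · exact (map_zero (algebraMap F E)).symm.le.trans (h (abs_nonneg _))
    · exact h (neg_le_abs _)
    · exact hx₁.le
    · exact Finset.mem_range_succ_iff.1 hi
  exact ⟨c, le_of_mul_le_mul_right hpow (by positivity)⟩

lemma archimedean_of_isAlgebraic [Archimedean F] [Algebra.IsAlgebraic F E]
    (h : Monotone (algebraMap F E)) : Archimedean E := by
  refine archimedean_iff_nat_le.2 fun x => ?_
  obtain ⟨c, hc⟩ :=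
    exists_le_algebraMap_of_isIntegral h (Algebra.IsAlgebraic.isAlgebraic (R := F) x).isIntegral
  obtain ⟨n, hn⟩ := exists_nat_ge c
  exact ⟨n, hc.trans (by simpa using h hn)⟩

end Archimedean

lemma isSumSq_of_forall_real_embedding_nonneg [Algebra ℚ F] [Algebra.IsAlgebraic ℚ F] {x : F}
    (hx : ∀ σ : F →+* ℝ, 0 ≤ σ x) : IsSumSq x := by
  have : CharZero F := algebraRat.charZero F
  refine isSumSq_of_forall_linearOrder_nonneg fun _ _ => ?_
  have : Archimedean F := archimedean_of_isAlgebraic (F := ℚ) fun a b hab => by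
    simpa only [eq_ratCast, Rat.cast_le] using hab
  obtain ⟨φ⟩ := Real.nonemptyOrderRingHom F
  by_contra! hneg
  have hφ : StrictMono φ := φ.monotone'.strictMono_of_injective φ.toRingHom.injective
  exact (hx φ).not_gt (by simpa using hφ hneg)

end Orderings

section SumsOfSquares

lemma isSumSq_map {R S : Type*} [Semiring R] [Semiring S] (f : R →+* S) {x : R} (hx : IsSumSq x) :
    IsSumSq (f x) := by
  induction hx with
  | zero => rw [map_zero]; exact IsSumSq.zero
  | sq_add a _ ih => rw [map_add, map_mul]; exact IsSumSq.sq_add _ ih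

lemma exists_finiteDimensional_isSumSq {F E : Type*} [Field F] [Field E] [Algebra F E]
    [Algebra.IsAlgebraic F E] {x : E} (hx : IsSumSq x) :
    ∃ (K : IntermediateField F E) (y : K), FiniteDimensional F K ∧ (y : E) = x ∧ IsSumSq y := by
  induction hx with
  | zero => exact ⟨⊥, 0, inferInstance, by simp, IsSumSq.zero⟩
  | @sq_add a s _ ih =>
    obtain ⟨K, y, hK, rfl, hy⟩ := ih
    have : FiniteDimensional F (IntermediateField.adjoin F {a}) :=
      IntermediateField.adjoin.finiteDimensional (Algebra.IsAlgebraic.isAlgebraic a).isIntegral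
    have ha : a ∈ K ⊔ IntermediateField.adjoin F {a} :=
      (le_sup_right : _ ≤ K ⊔ _) (IntermediateField.mem_adjoin_simple_self F a)
    exact ⟨K ⊔ IntermediateField.adjoin F {a},
      ⟨a, ha⟩ * ⟨a, ha⟩ + IntermediateField.inclusion le_sup_left y,
      IntermediateField.finiteDimensional_sup _ _, by simp,
      IsSumSq.sq_add _ (isSumSq_map (IntermediateField.inclusion le_sup_left).toRingHom hy)⟩

end SumsOfSquares

section Quaternion

open Quaternion

lemma normSq_mk {R : Type*} [CommRing R] (a b c d : R) :
    normSq (⟨a, b, c, d⟩ : ℍ[R]) = a ^ 2 + b ^ 2 + c ^ 2 + d ^ 2 :=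
  normSq_def' _

lemma exists_re_mul_ne_zero {R : Type*} [CommRing R] {z : ℍ[R]} (hz : z ≠ 0) :
    ∃ w : ℍ[R], (z * w).re ≠ 0 := by
  contrapose! hz
  have h (a b c d : R) : z.re * a - z.imI * b - z.imJ * c - z.imK * d = 0 :=
    (re_mul z _).symm.trans (hz ⟨a, b, c, d⟩)
  ext
  · simpa using h 1 0 0 0
  · simpa using h 0 1 0 0
  · simpa using h 0 0 1 0
  · simpa using h 0 0 0 1

variable {F : Type*} [Field F]

lemma normSq_surjective_of_exists_eq_zero [NeZero (2 : F)]
    (h : ∃ z : ℍ[F], z ≠ 0 ∧ normSq z = 0) : Function.Surjective (normSq : ℍ[F] → F) := fun a => by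
  obtain ⟨z, hz, hz₀⟩ := h
  obtain ⟨w, hw⟩ := exists_re_mul_ne_zero hz
  refine ⟨((a - normSq w) / (2 * (z * w).re)) • z + star w, ?_⟩
  rw [normSq_add, normSq_smul, normSq_star, star_star, hz₀, smul_mul_assoc, re_smul, smul_eq_mul]
  have h₂ : (2 : F) ≠ 0 := two_ne_zero
  field_simp
  ring

lemma div_mem_range_normSq {a b : F} (ha : a ∈ Set.range (normSq : ℍ[F] → F))
    (hb : b ∈ Set.range (normSq : ℍ[F] → F)) : a / b ∈ Set.range (normSq : ℍ[F] → F) := by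
  obtain ⟨x, rfl⟩ := ha
  obtain ⟨y, rfl⟩ := hb
  refine ⟨(normSq y)⁻¹ • (x * y), ?_⟩
  rw [normSq_smul, map_mul]
  rcases eq_or_ne (normSq y) 0 with h | h
  · simp [h]
  · field_simp

lemma mem_range_normSq_of_normSq_eq_mul [NeZero (2 : F)] {d : F} {x y : ℍ[F]}
    (hxy : x ≠ 0 ∨ y ≠ 0) (h : normSq x = d * normSq y) :
    d ∈ Set.range (normSq : ℍ[F] → F) := by
  rcases eq_or_ne (normSq y) 0 with hy | hy
  · rw [hy, mul_zero] at h
    exact normSq_surjective_of_exists_eq_zero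
      (hxy.elim (fun hx => ⟨x, hx, h⟩) fun hy' => ⟨y, hy', hy⟩) d
  · rw [← mul_div_cancel_right₀ d hy, ← h]
    exact div_mem_range_normSq ⟨x, rfl⟩ ⟨y, rfl⟩

end Quaternion

/-! ### Valuations, norms and squares -/

section NormGroup

variable {K : Type*} [Field K]

/-- The group of nonzero values of `α² - uβ²`, that is, of norms from `K(√u)` when `u` is not a
square. -/
def normGroup (u : K) : Subgroup Kˣ where
  carrier := {x | ∃ α β : K, (x : K) = α ^ 2 - u * β ^ 2}
  one_mem' := ⟨1, 0, by simp⟩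
  mul_mem' := by
    rintro a b ⟨p, q, ha⟩ ⟨r, s, hb⟩
    exact ⟨p * r + u * q * s, p * s + q * r, by rw [Units.val_mul, ha, hb]; ring⟩
  inv_mem' := by
    rintro a ⟨p, q, ha⟩
    refine ⟨p * (a : K)⁻¹, q * (a : K)⁻¹, ?_⟩
    rw [mul_pow, mul_pow, ← mul_assoc, ← sub_mul, ← ha, Units.val_inv_eq_inv_val]
    field_simp

end NormGroup

section Valuation

variable {K Γ₀ : Type*} [Field K] [LinearOrderedCommGroupWithZero Γ₀] (v : Valuation K Γ₀)

lemma valuation_natCast_le_one (n : ℕ) : v n ≤ 1 := by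
  induction n with
  | zero => simp
  | succ n ih => exact_mod_cast v.map_add_le ih v.map_one.le

lemma valuation_two_le_one : v 2 ≤ 1 := by
  exact_mod_cast valuation_natCast_le_one v 2

lemma valuation_four_le_one : v 4 ≤ 1 := by
  exact_mod_cast valuation_natCast_le_one v 4

lemma valuation_four : v 4 = v 2 ^ 2 := by
  rw [← map_pow]
  norm_num

/-- The subgroup of elements whose valuation is a square in the value group. -/
def evenValuation : Subgroup Kˣ where
  carrier := {x | IsSquare (v x)}
  one_mem' := by simp
  mul_mem' := fun {a b} (ha : IsSquare _) (hb : IsSquare _) => by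
    simpa only [Set.mem_ofPred_eq, Units.val_mul, map_mul] using ha.mul hb
  inv_mem' := fun {a} (ha : IsSquare _) => by
    simpa only [Set.mem_ofPred_eq, Units.val_inv_eq_inv_val, map_inv₀] using ha.inv

variable {v}

lemma mem_evenValuation {x : Kˣ} : x ∈ evenValuation v ↔ IsSquare (v x) := Iff.rfl

lemma mem_evenValuation_of_eq_one {x : Kˣ} (hx : v x = 1) : x ∈ evenValuation v := by
  rw [mem_evenValuation, hx]
  exact IsSquare.one

lemma isSquare_valuation_sq (x : K) : IsSquare (v (x ^ 2)) := by
  rw [map_pow]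
  exact IsSquare.sq _

lemma mem_evenValuation_of_valuation_eq_mul_sq {x u : Kˣ} {β : K} (hu : u ∈ evenValuation v)
    (hx : v x = v (u * β ^ 2)) : x ∈ evenValuation v := by
  rw [mem_evenValuation, hx, map_mul]
  exact (mem_evenValuation.1 hu).mul (isSquare_valuation_sq β)

lemma lt_of_lt_four_mul {x y : K} (h : v y < v (4 * x)) : v y < v x := by
  refine h.trans_le ?_
  rw [map_mul]
  exact mul_le_of_le_one_left' (valuation_four_le_one v)

variable [NeZero (2 : K)]

lemma four_mul_ne_zero {x : K} (hx : x ≠ 0) : 4 * x ≠ 0 := by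
  have h : (2 : K) * 2 = 4 := by norm_num
  exact mul_ne_zero (h ▸ mul_ne_zero two_ne_zero two_ne_zero) hx

variable (v) in
/-- The elements which are squares in the completion of `K` at `v`. By Hensel's lemma these are the
elements whose ratio to some square of `K` is congruent to `1` modulo an element of valuation less
than that of `4`, and this is what we take as the definition. -/
def localSquares : Subgroup Kˣ where
  carrier := {x | ∃ y : K, v (y ^ 2 - x) < v (4 * x)}
  one_mem' := ⟨1, by
    simpa [zero_lt_iff] using four_mul_ne_zero (one_ne_zero (α := K))⟩
  mul_mem' := by
    rintro a b ⟨y, hy⟩ ⟨z, hz⟩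
    refine ⟨y * z, ?_⟩
    have h : (y * z) ^ 2 - ((a * b : Kˣ) : K) = (y ^ 2 - a) * z ^ 2 + a * (z ^ 2 - b) := by
      rw [Units.val_mul]
      ring
    have hz' : v (z ^ 2) = v b := v.map_eq_of_sub_lt (lt_of_lt_four_mul hz)
    rw [h, Units.val_mul]
    refine v.map_add_lt ?_ ?_
    · rw [map_mul, hz', ← mul_assoc, map_mul v (4 * _)]
      exact mul_lt_mul_of_pos_right hy (zero_lt_iff.2 (v.ne_zero_iff.2 b.ne_zero))
    · rw [map_mul, mul_left_comm, map_mul v (a : K)]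
      exact mul_lt_mul_of_pos_left hz (zero_lt_iff.2 (v.ne_zero_iff.2 a.ne_zero))
  inv_mem' := by
    rintro a ⟨y, hy⟩
    refine ⟨y / a, ?_⟩
    have h : (y / a) ^ 2 - ((a⁻¹ : Kˣ) : K) = (y ^ 2 - a) / a ^ 2 := by
      rw [Units.val_inv_eq_inv_val]
      field_simp
    have h' : 4 * ((a⁻¹ : Kˣ) : K) = 4 * a / a ^ 2 := by
      rw [Units.val_inv_eq_inv_val]
      field_simp
    rw [h, h', map_div₀, map_div₀]
    exact div_lt_div_of_pos_right hy (zero_lt_iff.2 (v.ne_zero_iff.2 (pow_ne_zero 2 a.ne_zero)))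

lemma mem_localSquares_of_sq_eq {x : Kˣ} {y : K} (h : y ^ 2 = x) : x ∈ localSquares v :=
  ⟨y, by rw [h, sub_self, map_zero, zero_lt_iff, v.ne_zero_iff]; exact four_mul_ne_zero x.ne_zero⟩

lemma sq_mem_localSquares (x : Kˣ) : x ^ 2 ∈ localSquares v :=
  mem_localSquares_of_sq_eq (Units.val_pow_eq_pow_val x 2).symm

lemma div_mem_localSquares {x y : Kˣ} (h : v (y - x : K) < v (4 * x)) : x / y ∈ localSquares v := by
  have hy := zero_lt_iff.2 (v.ne_zero_iff.2 y.ne_zero)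
  refine ⟨1, ?_⟩
  have h₁ : 1 ^ 2 - ((x / y : Kˣ) : K) = (y - x) / y := by
    rw [Units.val_div_eq_div_val]
    field_simp
  rw [h₁, Units.val_div_eq_div_val, ← mul_div_assoc, map_div₀, map_div₀]
  exact div_lt_div_of_pos_right h hy

lemma localSquares_le_evenValuation : localSquares v ≤ evenValuation v := by
  rintro x ⟨y, hy⟩
  rw [mem_evenValuation, ← v.map_eq_of_sub_lt (lt_of_lt_four_mul hy)]
  exact isSquare_valuation_sq y

lemma mem_localSquares_of_mul_sq {u : Kˣ} {α β : K}
    (h : v (α ^ 2 - u * β ^ 2) < v (4 * (u * β ^ 2))) : u ∈ localSquares v := by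
  have hβ : β ≠ 0 := by
    rintro rfl
    simp at h
  have hmem : u * Units.mk0 β hβ ^ 2 ∈ localSquares v := ⟨α, by simpa using h⟩
  exact (Subgroup.mul_mem_cancel_right _ (sq_mem_localSquares _)).1 hmem

section NormGroup

lemma normGroup_le_evenValuation_of_valuation_two_eq_one (h₂ : v 2 = 1) {u : Kˣ}
    (hu : u ∈ evenValuation v) (hu' : u ∉ localSquares v) :
    normGroup (u : K) ≤ evenValuation v := by
  rintro x ⟨α, β, hx⟩
  rcases lt_trichotomy (v (α ^ 2)) (v (u * β ^ 2)) with h | h | h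
  · exact mem_evenValuation_of_valuation_eq_mul_sq hu (hx ▸ v.map_sub_eq_of_lt_right h)
  · have hle : v x ≤ v (u * β ^ 2) := hx ▸ v.map_sub_le h.le le_rfl
    rcases hle.lt_or_eq with hlt | heq
    · refine (hu' (mem_localSquares_of_mul_sq (α := α) (β := β) ?_)).elim
      rwa [map_mul v 4, valuation_four, h₂, one_pow, one_mul, ← hx]
    · exact mem_evenValuation_of_valuation_eq_mul_sq hu heq
  · rw [mem_evenValuation, hx, v.map_sub_eq_of_lt_left h]
    exact isSquare_valuation_sq α

/-- Here `K(√u)/K` is unramified at `v`, with ring of integers generated by `(1 + √u) / 2`. -/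
lemma normGroup_le_evenValuation_of_valuation_one_sub_le {u : Kˣ} (h₁ : v u = 1)
    (h₄ : v (1 - u) ≤ v 4) (hu : u ∉ localSquares v) : normGroup (u : K) ≤ evenValuation v := by
  have hfour : (4 : K) ≠ 0 := by simpa using four_mul_ne_zero (one_ne_zero (α := K))
  rintro x ⟨α, β, hx⟩
  obtain ⟨c, hc⟩ : ∃ c : K, 4 * c = 1 - u := ⟨(1 - u) / 4, mul_div_cancel₀ _ hfour⟩
  obtain ⟨s, hs⟩ : ∃ s : K, 2 * s = α - β := ⟨(α - β) / 2, mul_div_cancel₀ _ two_ne_zero⟩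
  have hc₁ : v c ≤ 1 := by
    rw [← hc, map_mul] at h₄
    exact le_of_mul_le_mul_left (by simpa using h₄) (zero_lt_iff.2 (v.ne_zero_iff.2 hfour))
  have hx' : (x : K) = 4 * (s ^ 2 + (s * β + c * β ^ 2)) := by
    rw [hx, show α = 2 * s + β by rw [hs]; ring]
    linear_combination -β ^ 2 * hc
  have hcβ : v (c * β ^ 2) ≤ v β ^ 2 := by
    rw [map_mul, map_pow]
    exact mul_le_of_le_one_left' hc₁
  rcases le_or_gt (v s) (v β) with h | h
  · have hle : v x ≤ v (4 * (u * β ^ 2)) := by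
      rw [hx', map_mul, map_mul v 4, map_mul v (u : K), h₁, one_mul, map_pow]
      gcongr
      refine v.map_add_le ?_ (v.map_add_le ?_ hcβ)
      · rw [map_pow]
        gcongr
      · rw [map_mul, sq]
        gcongr
    rcases hle.lt_or_eq with hlt | heq
    · exact (hu (mem_localSquares_of_mul_sq (hx ▸ hlt))).elim
    · rw [mem_evenValuation, heq, show 4 * ((u : K) * β ^ 2) = u * (2 * β) ^ 2 by ring, map_mul, h₁,
        one_mul]
      exact isSquare_valuation_sq _
  · have hlt : v (s * β + c * β ^ 2) < v (s ^ 2) := by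
      have hs₀ : 0 < v s := zero_le.trans_lt h
      rw [map_pow]
      refine v.map_add_lt ?_ (hcβ.trans_lt (pow_lt_pow_left₀ h zero_le two_ne_zero))
      rw [map_mul, sq]
      exact mul_lt_mul_of_pos_left h hs₀
    rw [mem_evenValuation, hx', map_mul, v.map_add_eq_of_lt_left hlt, ← map_mul,
      show 4 * s ^ 2 = (2 * s) ^ 2 by ring]
    exact isSquare_valuation_sq _

lemma normGroup_le_localSquares_sup_zpowers (h₂ : v 2 = 1) {u : Kˣ} (hu : u ∉ evenValuation v) :
    normGroup (u : K) ≤ localSquares v ⊔ Subgroup.zpowers (-u) := by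
  have h₄ : ∀ z : K, v (4 * z) = v z := fun z => by
    rw [map_mul, valuation_four, h₂, one_pow, one_mul]
  rintro x ⟨α, β, hx⟩
  rcases lt_trichotomy (v (α ^ 2)) (v (u * β ^ 2)) with h | h | h
  · have hmem : -u * x ∈ localSquares v := by
      refine ⟨u * β, ?_⟩
      have h₁ : (u * β) ^ 2 - ((-u * x : Kˣ) : K) = u * α ^ 2 := by
        rw [Units.val_mul, Units.val_neg, hx]
        ring
      rw [h₁, h₄, Units.val_mul, Units.val_neg, hx, map_mul, map_mul, v.map_neg,
        v.map_sub_eq_of_lt_right h]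
      exact mul_lt_mul_of_pos_left h (zero_lt_iff.2 (v.ne_zero_iff.2 u.ne_zero))
    rw [← inv_mul_cancel_left (-u) x, mul_comm]
    exact Subgroup.mul_mem_sup hmem (inv_mem (Subgroup.mem_zpowers _))
  · refine (hu ?_).elim
    have hβ : β ≠ 0 := by
      rintro rfl
      have hα : α = 0 := by simpa using h
      exact x.ne_zero (by simp [hx, hα])
    have hv : v u = v ((α / β) ^ 2) := by
      rw [div_pow, map_div₀, h, map_mul, mul_div_cancel_right₀]
      exact v.ne_zero_iff.2 (pow_ne_zero 2 hβ)
    exact mem_evenValuation.2 (hv ▸ isSquare_valuation_sq _)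
  · refine Subgroup.mem_sup_left ⟨α, ?_⟩
    rw [h₄, hx, v.map_sub_eq_of_lt_left h, sub_sub_cancel]
    exact h

lemma mem_localSquares_sup_zpowers_neg_iff {u x : Kˣ} (hu : u ∉ evenValuation v)
    (hx : x ∈ evenValuation v) :
    x ∈ localSquares v ⊔ Subgroup.zpowers (-u) ↔ x ∈ localSquares v := by
  refine ⟨fun h => ?_, Subgroup.mem_sup_left⟩
  obtain ⟨s, hs, z, hz, rfl⟩ := Subgroup.mem_sup.1 h
  obtain ⟨n, rfl⟩ := Subgroup.mem_zpowers_iff.1 hz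
  have hsq : ∀ m : ℤ, (-u) ^ (2 * m) ∈ localSquares v := fun m => by
    rw [mul_comm, zpow_mul]
    exact sq_mem_localSquares _
  rcases Int.even_or_odd' n with ⟨m, rfl | rfl⟩
  · exact mul_mem hs (hsq m)
  · rw [zpow_add_one, ← mul_assoc, Subgroup.mul_mem_cancel_left _
      (localSquares_le_evenValuation (mul_mem hs (hsq m))), mem_evenValuation, Units.val_neg,
      v.map_neg] at hx
    exact (hu hx).elim

end NormGroup

end Valuation

section Integral

variable {K : Type*} [Field K] {v : Valuation K (WithZero (Multiplicative ℤ))}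

lemma mem_evenValuation_iff_even_log {x : Kˣ} :
    x ∈ evenValuation v ↔ Even (WithZero.log (v x)) := by
  have hx : v x ≠ 0 := v.ne_zero_iff.2 x.ne_zero
  refine ⟨fun ⟨y, hy⟩ => ?_, fun ⟨n, hn⟩ => ?_⟩
  · have hy₀ : y ≠ 0 := by
      rintro rfl
      exact hx (by rw [hy, mul_zero])
    rw [hy, WithZero.log_mul hy₀ hy₀]
    exact Even.add_self _
  · refine ⟨WithZero.exp n, ?_⟩
    rw [← WithZero.exp_add, ← hn, WithZero.exp_log hx]

lemma mul_mem_evenValuation_iff {x y : Kˣ} :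
    x * y ∈ evenValuation v ↔ (x ∈ evenValuation v ↔ y ∈ evenValuation v) := by
  simp_rw [mem_evenValuation_iff_even_log, Units.val_mul, map_mul]
  rw [WithZero.log_mul (v.ne_zero_iff.2 x.ne_zero) (v.ne_zero_iff.2 y.ne_zero), Int.even_add]

lemma evenValuation_relIndex_dvd_two (U : Subgroup Kˣ) : (evenValuation v).relIndex U ∣ 2 :=
  relIndex_dvd_two_iff_mul_mem.2 fun _ _ _ _ hx hy =>
    mul_mem_evenValuation_iff.2 (iff_of_false hx hy)

lemma evenValuation_le_unitGroup_sup_localSquares [NeZero (2 : K)] (hv : Function.Surjective v) :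
    evenValuation v ≤ v.valuationSubring.unitGroup ⊔ localSquares v := by
  rintro x ⟨a, ha⟩
  obtain ⟨y, rfl⟩ := hv a
  have hy : y ≠ 0 := by
    rintro rfl
    exact v.ne_zero_iff.2 x.ne_zero (by rw [ha, map_zero, mul_zero])
  rw [← div_mul_cancel x (Units.mk0 y hy ^ 2)]
  refine Subgroup.mul_mem_sup ?_ (sq_mem_localSquares _)
  rw [Valuation.mem_unitGroup_iff, Units.val_div_eq_div_val, map_div₀, ha, Units.val_pow_eq_pow_val,
    Units.val_mk0, map_pow, sq]
  exact div_self (mul_ne_zero (v.ne_zero_iff.2 hy) (v.ne_zero_iff.2 hy))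

end Integral

section Dedekind

open IsDedekindDomain

variable {R K : Type*} [CommRing R] [IsDedekindDomain R] [Field K] [Algebra R K]
  [IsFractionRing R K]

lemma finite_setOf_valuation_ne_one {x : K} (hx : x ≠ 0) :
    {v : HeightOneSpectrum R | v.valuation K x ≠ 1}.Finite := by
  refine ((HeightOneSpectrum.Support.finite R x).union
    (HeightOneSpectrum.Support.finite R x⁻¹)).subset fun v hv => ?_
  rcases lt_or_gt_of_ne hv with h | h
  · refine Or.inr ?_
    change 1 < v.valuation K x⁻¹
    rw [map_inv₀]
    exact (one_lt_inv₀ (zero_lt_iff.2 ((Valuation.ne_zero_iff _).2 hx))).2 h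
  · exact Or.inl h

lemma valuation_algebraMap_le_exp_iff (v : HeightOneSpectrum R) (a : R) (n : ℕ) :
    v.valuation K (algebraMap R K a) ≤ WithZero.exp (-(n : ℤ)) ↔ a ∈ v.asIdeal ^ n := by
  rw [v.valuation_of_algebraMap, v.intValuation_le_pow_iff_mem]

lemma valuation_algebraMap_lt_exp_iff (v : HeightOneSpectrum R) (a : R) (n : ℕ) :
    v.valuation K (algebraMap R K a) < WithZero.exp (-(n : ℤ)) ↔ a ∈ v.asIdeal ^ (n + 1) := by
  rw [← valuation_algebraMap_le_exp_iff (K := K)]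
  rcases eq_or_ne (v.valuation K (algebraMap R K a)) 0 with h | h
  · simp [h]
  · rw [← WithZero.exp_log h, WithZero.exp_lt_exp, WithZero.exp_le_exp]
    lia

lemma exists_forall_sub_mem_pow (S : Finset (HeightOneSpectrum R)) (n : HeightOneSpectrum R → ℕ)
    (a : HeightOneSpectrum R → R) : ∃ y : R, ∀ v ∈ S, y - a v ∈ v.asIdeal ^ n v :=
  exists_forall_sub_mem_ideal HeightOneSpectrum.asIdeal n (fun v _ => v.prime)
    (fun _ _ _ _ h h' => h (HeightOneSpectrum.ext h')) fun v => a v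

lemma exists_forall_mem_evenValuation_iff (S : Finset (HeightOneSpectrum R))
    (η : HeightOneSpectrum R → Prop) :
    ∃ x : Kˣ, ∀ v ∈ S, (x ∈ evenValuation (v.valuation K) ↔ η v) := by
  classical
  choose π hπ using fun v : HeightOneSpectrum R => v.intValuation_exists_uniformizer
  obtain ⟨y, hy⟩ := exists_forall_sub_mem_pow S (fun _ => 2) fun v => if η v then 1 else π v
  have hval : ∀ v ∈ S, v.valuation K (algebraMap R K y) =
      WithZero.exp (if η v then 0 else -1) := fun v hv => by
    have hmodel : v.valuation K (algebraMap R K (if η v then 1 else π v)) =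
        WithZero.exp (if η v then 0 else -1) := by
      split_ifs
      · simp
      · rw [v.valuation_of_algebraMap, hπ]
    rw [← hmodel]
    refine Valuation.map_eq_of_sub_lt _ ?_
    rw [hmodel, ← map_sub]
    refine ((valuation_algebraMap_le_exp_iff v _ 2).2 (hy v hv)).trans_lt ?_
    rw [WithZero.exp_lt_exp]
    split_ifs <;> norm_num
  rcases S.eq_empty_or_nonempty with rfl | ⟨v₀, hv₀⟩
  · exact ⟨1, by simp⟩
  have hy₀ : algebraMap R K y ≠ 0 := fun h =>
    WithZero.exp_ne_zero (by rw [← hval v₀ hv₀, h, map_zero])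
  refine ⟨Units.mk0 _ hy₀, fun v hv => ?_⟩
  rw [mem_evenValuation_iff_even_log, Units.val_mk0, hval v hv, WithZero.log_exp]
  split_ifs with h <;> simp [h]

end Dedekind

/-! ### The local index of squares -/

section Groups

variable {G H : Type*} [CommGroup G] [CommGroup H]

lemma index_square_eq_card_ker [Finite G] :
    (Subgroup.square G).index = Nat.card (powMonoidHom 2 : G →* G).ker := by
  have hrange : Subgroup.square G = (powMonoidHom 2 : G →* G).range := by
    ext x
    simp only [Subgroup.mem_square, MonoidHom.mem_range, powMonoidHom_apply, isSquare_iff_exists_sq,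
      eq_comm]
  have hker := Subgroup.card_mul_index (powMonoidHom 2 : G →* G).ker
  rw [Subgroup.index_ker, mul_comm, ← Subgroup.card_mul_index (powMonoidHom 2 : G →* G).range]
    at hker
  rw [hrange]
  exact (Nat.eq_of_mul_eq_mul_left Nat.card_pos hker).symm

lemma relIndex_le_index_of_forall_div_mem {A B : Subgroup G} {C : Subgroup H} (f : B → H)
    (hC : C.index ≠ 0) (h : ∀ x y : B, f y / f x ∈ C → (y / x : G) ∈ A) :
    A.relIndex B ≠ 0 ∧ A.relIndex B ≤ C.index := by
  have : C.FiniteIndex := ⟨hC⟩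
  let g : B ⧸ A.subgroupOf B → H ⧸ C := fun q => QuotientGroup.mk (f q.out)
  have hg : Function.Injective g := fun p q hpq => by
    rw [← p.out_eq', ← q.out_eq']
    refine QuotientGroup.eq.2 ?_
    rw [Subgroup.mem_subgroupOf, mul_comm, ← div_eq_mul_inv]
    refine h _ _ ?_
    rw [div_eq_mul_inv, mul_comm]
    exact QuotientGroup.eq.1 hpq
  have : Finite (B ⧸ A.subgroupOf B) := Finite.of_injective g hg
  exact ⟨Nat.card_pos.ne', Nat.card_le_card_of_injective g hg⟩

end Groups

section LocalIndex

open IsDedekindDomain NumberField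

variable {K : Type*} [Field K] [NumberField K] (v : HeightOneSpectrum (𝓞 K))

lemma exists_valuation_two_eq_exp : ∃ e : ℕ, v.valuation K 2 = WithZero.exp (-(e : ℤ)) := by
  have h₀ : v.valuation K 2 ≠ 0 := (Valuation.ne_zero_iff _).2 two_ne_zero
  have h₁ := valuation_two_le_one (v.valuation K)
  rw [← WithZero.exp_log h₀, ← WithZero.exp_zero, WithZero.exp_le_exp] at h₁
  obtain ⟨e, he⟩ := Int.eq_ofNat_of_zero_le (neg_nonneg.2 h₁)
  exact ⟨e, by rw [← he, neg_neg, WithZero.exp_log h₀]⟩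

lemma finite_quotient_pow (n : ℕ) : Finite (𝓞 K ⧸ v.asIdeal ^ n) :=
  Ideal.finiteQuotientOfFreeOfNeBot _ (pow_ne_zero _ v.ne_bot)

lemma card_ker_factor_pow (m n : ℕ) :
    Nat.card (RingHom.ker (Ideal.Quotient.factorPow v.asIdeal (Nat.le_add_right m n))) =
      Ideal.absNorm v.asIdeal ^ n := by
  have hcard : ∀ k, Nat.card (𝓞 K ⧸ v.asIdeal ^ k) = Ideal.absNorm v.asIdeal ^ k := fun k => by
    rw [← map_pow, Ideal.absNorm_apply]
    rfl
  let f := Ideal.Quotient.factorPow v.asIdeal (Nat.le_add_right m n)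
  have hf : f.toAddMonoidHom.range = ⊤ :=
    AddMonoidHom.range_eq_top.2
      (Ideal.Quotient.factor_surjective (Ideal.pow_le_pow_right (Nat.le_add_right m n)))
  have hmul := AddSubgroup.card_mul_index f.toAddMonoidHom.ker
  rw [AddSubgroup.index_ker, hf, AddSubgroup.card_top, hcard, hcard] at hmul
  refine Nat.eq_of_mul_eq_mul_right (Nat.pos_of_ne_zero (pow_ne_zero m ?_))
    (hmul.trans ((pow_add _ m n).trans (mul_comm _ _)))
  exact Ideal.absNorm_eq_zero_iff.not.2 v.ne_bot

variable {v} {e : ℕ} (he : v.valuation K 2 = WithZero.exp (-(e : ℤ)))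

include he

lemma valuation_algebraMap_lt_four_iff (a : 𝓞 K) :
    v.valuation K (algebraMap (𝓞 K) K a) < v.valuation K 4 ↔ a ∈ v.asIdeal ^ (e + 1 + e) := by
  rw [show e + 1 + e = e * 2 + 1 by ring, ← valuation_algebraMap_lt_exp_iff (K := K),
    valuation_four, he, ← WithZero.exp_nsmul]
  simp [mul_comm]

lemma sub_one_mem_or_add_one_mem {c : 𝓞 K} (hc : c ^ 2 - 1 ∈ v.asIdeal ^ (e + 1 + e)) :
    c - 1 ∈ v.asIdeal ^ (e + 1) ∨ c + 1 ∈ v.asIdeal ^ (e + 1) := by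
  rw [show c ^ 2 - 1 = (c - 1) * (c + 1) by ring, ← valuation_algebraMap_lt_four_iff he, map_mul,
    map_mul, valuation_four, sq] at hc
  rw [← valuation_algebraMap_lt_exp_iff (K := K), ← valuation_algebraMap_lt_exp_iff (K := K), ← he]
  by_contra! h
  exact hc.not_ge (mul_le_mul' h.1 h.2)

lemma card_ker_powMonoidHom_two_le :
    Nat.card (powMonoidHom 2 : (𝓞 K ⧸ v.asIdeal ^ (e + 1 + e))ˣ →* _).ker ≤
      2 * Ideal.absNorm v.asIdeal ^ e := by
  let f := Ideal.Quotient.factorPow v.asIdeal (Nat.le_add_right (e + 1) e)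
  have : Finite (𝓞 K ⧸ v.asIdeal ^ (e + 1 + e)) := finite_quotient_pow v _
  have hroot : ∀ x : (powMonoidHom 2 : (𝓞 K ⧸ v.asIdeal ^ (e + 1 + e))ˣ →* _).ker,
      ∃ p : Bool × RingHom.ker f,
        ((x : (𝓞 K ⧸ v.asIdeal ^ (e + 1 + e))ˣ) : 𝓞 K ⧸ v.asIdeal ^ (e + 1 + e)) =
          (bif p.1 then 1 else -1) + p.2 := by
    rintro ⟨x, hx⟩
    have hx₂ : (x : 𝓞 K ⧸ v.asIdeal ^ (e + 1 + e)) ^ 2 = 1 := by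
      rw [← Units.val_pow_eq_pow_val, show x ^ 2 = 1 from hx, Units.val_one]
    obtain ⟨c, hc⟩ := Ideal.Quotient.mk_surjective (x : 𝓞 K ⧸ v.asIdeal ^ (e + 1 + e))
    have hmem : c ^ 2 - 1 ∈ v.asIdeal ^ (e + 1 + e) := by
      rw [← Ideal.Quotient.eq_zero_iff_mem, map_sub, map_pow, hc, hx₂, map_one, sub_self]
    have hker : ∀ d ∈ v.asIdeal ^ (e + 1), Ideal.Quotient.mk _ d ∈ RingHom.ker f := fun d hd => by
      rw [RingHom.mem_ker]
      exact Ideal.Quotient.eq_zero_iff_mem.2 hd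
    rcases sub_one_mem_or_add_one_mem he hmem with h | h
    · exact ⟨(true, ⟨_, hker _ h⟩), by simp [← hc]⟩
    · exact ⟨(false, ⟨_, hker _ h⟩), by simp [← hc]⟩
  choose g hg using hroot
  have hinj : Function.Injective g := fun x y h =>
    Subtype.ext (Units.ext (by rw [hg x, hg y, h]))
  calc _ ≤ Nat.card (Bool × RingHom.ker f) := Nat.card_le_card_of_injective g hinj
    _ = _ := by rw [Nat.card_prod, card_ker_factor_pow, Nat.card_eq_fintype_card, Fintype.card_bool]

omit he in
lemma exists_algebraMap_eq_div_mem_localSquares {x : Kˣ} (hx : v.valuation K x = 1) :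
    ∃ (a : 𝓞 K) (y : Kˣ), algebraMap (𝓞 K) K a = y ∧ v.valuation K y = 1 ∧
      x / y ∈ localSquares (v.valuation K) := by
  have h₄ : v.valuation K 4 ≠ 0 := (Valuation.ne_zero_iff _).2 (by norm_num)
  obtain ⟨a, ha⟩ := v.exists_valuation_sub_lt_of_integer hx.le (Units.mk0 _ h₄)
  have hax : v.valuation K (algebraMap (𝓞 K) K a - x) < v.valuation K (4 * x) := by
    simpa [hx] using ha
  have ha₁ : v.valuation K (algebraMap (𝓞 K) K a) = 1 :=
    (Valuation.map_eq_of_sub_lt _ (lt_of_lt_four_mul hax)).trans hx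
  have ha₀ : algebraMap (𝓞 K) K a ≠ 0 := fun h => by simp [h] at ha₁
  exact ⟨a, Units.mk0 _ ha₀, rfl, ha₁, div_mem_localSquares hax⟩

lemma div_mem_localSquares_of_sub_mul_sq_mem {a b c : 𝓞 K}
    (h : b - a * c ^ 2 ∈ v.asIdeal ^ (e + 1 + e)) {x y : Kˣ} (ha : algebraMap (𝓞 K) K a = x)
    (hb : algebraMap (𝓞 K) K b = y) (hy : v.valuation K y = 1) :
    y / x ∈ localSquares (v.valuation K) := by
  have hlt : v.valuation K (x * algebraMap (𝓞 K) K c ^ 2 - y) < v.valuation K (4 * y) := by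
    rw [Valuation.map_sub_swap, map_mul _ 4, hy, mul_one, ← ha, ← hb, ← map_pow, ← map_mul,
      ← map_sub]
    exact (valuation_algebraMap_lt_four_iff he _).2 h
  have hc : algebraMap (𝓞 K) K c ≠ 0 := by
    intro hc
    have := (Valuation.map_eq_of_sub_lt _ (lt_of_lt_four_mul hlt)).trans hy
    simp [hc] at this
  have hmem : y / (x * Units.mk0 _ hc ^ 2) ∈ localSquares (v.valuation K) :=
    div_mem_localSquares (by simpa using hlt)
  rwa [← div_div, div_eq_mul_inv _ (_ ^ 2),
    Subgroup.mul_mem_cancel_right _ (inv_mem (sq_mem_localSquares _))] at hmem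

lemma localSquares_relIndex_unitGroup_le :
    (localSquares (v.valuation K)).relIndex (v.valuation K).valuationSubring.unitGroup ≠ 0 ∧
      (localSquares (v.valuation K)).relIndex (v.valuation K).valuationSubring.unitGroup ≤
        2 * Ideal.absNorm v.asIdeal ^ e := by
  have : Finite (𝓞 K ⧸ v.asIdeal ^ (e + 1 + e)) := finite_quotient_pow v _
  have hred : ∀ x : (v.valuation K).valuationSubring.unitGroup,
      ∃ (a : 𝓞 K) (y : Kˣ) (r : (𝓞 K ⧸ v.asIdeal ^ (e + 1 + e))ˣ), algebraMap (𝓞 K) K a = y ∧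
        v.valuation K y = 1 ∧ (x / y : Kˣ) ∈ localSquares (v.valuation K) ∧
        Ideal.Quotient.mk _ a = (r : 𝓞 K ⧸ v.asIdeal ^ (e + 1 + e)) := fun x => by
    obtain ⟨a, y, hay, hy, hxy⟩ := exists_algebraMap_eq_div_mem_localSquares
      ((Valuation.mem_unitGroup_iff ..).1 x.2)
    have ha : a ∉ v.asIdeal := by
      rw [← v.valuation_eq_one_iff_notMem (K := K), hay, hy]
    have := v.isMaximal
    exact ⟨a, y, (Ideal.Quotient.isUnit_mk_pow_of_notMem _ ha).unit, hay, hy, hxy, rfl⟩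
  choose a z r haz hz hxz har using hred
  have hindex := index_square_eq_card_ker (G := (𝓞 K ⧸ v.asIdeal ^ (e + 1 + e))ˣ)
  have hle := relIndex_le_index_of_forall_div_mem (A := localSquares (v.valuation K))
    (C := Subgroup.square _) r (hindex ▸ Nat.card_pos.ne') fun x y hxy => ?_
  · exact ⟨hle.1, hle.2.trans (hindex.trans_le (card_ker_powMonoidHom_two_le he))⟩
  obtain ⟨s, hs⟩ := isSquare_iff_exists_sq _ |>.1 hxy
  obtain ⟨c, hc⟩ := Ideal.Quotient.mk_surjective (s : 𝓞 K ⧸ v.asIdeal ^ (e + 1 + e))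
  have hmem : a y - a x * c ^ 2 ∈ v.asIdeal ^ (e + 1 + e) := by
    rw [← Ideal.Quotient.eq_zero_iff_mem, map_sub, map_mul, map_pow, hc, har, har, sub_eq_zero,
      ← Units.val_pow_eq_pow_val, ← Units.val_mul, ← hs, mul_div_cancel]
  have hzz := div_mem_localSquares_of_sub_mul_sq_mem he hmem (haz x) (haz y) (hz y)
  have hprod : (y / x : Kˣ) = y / z y * (z y / z x) * (x / z x)⁻¹ := by
    rw [inv_div, div_mul_div_cancel, div_mul_div_cancel]
  rw [hprod]
  exact mul_mem (mul_mem (hxz y) hzz) (inv_mem (hxz x))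

lemma localSquares_index_le :
    (localSquares (v.valuation K)).index ≠ 0 ∧
      (localSquares (v.valuation K)).index ≤ 4 * Ideal.absNorm v.asIdeal ^ e := by
  let LS := localSquares (v.valuation K)
  let EV := evenValuation (v.valuation K)
  have hLS : LS ≤ EV := fun x hx => localSquares_le_evenValuation hx
  obtain ⟨hunit₀, hunit⟩ := localSquares_relIndex_unitGroup_le he
  have hsup : LS.relIndex ((v.valuation K).valuationSubring.unitGroup ⊔ LS) =
      LS.relIndex (v.valuation K).valuationSubring.unitGroup := Subgroup.relIndex_sup_right _ _
  have hle : LS.relIndex EV ∣ LS.relIndex (v.valuation K).valuationSubring.unitGroup :=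
    hsup ▸ Dvd.intro _ (Subgroup.relIndex_mul_relIndex LS EV _ hLS
      (evenValuation_le_unitGroup_sup_localSquares (v.valuation_surjective K)))
  have hEV : EV.index ∣ 2 := Subgroup.relIndex_top_right EV ▸ evenValuation_relIndex_dvd_two ⊤
  have hmul : LS.relIndex EV * EV.index = LS.index := Subgroup.relIndex_mul_index hLS
  rw [show (localSquares (v.valuation K)).index = _ from hmul.symm]
  refine ⟨mul_ne_zero (ne_zero_of_dvd_ne_zero hunit₀ hle)
    (ne_zero_of_dvd_ne_zero two_ne_zero hEV), ?_⟩
  calc _ ≤ 2 * Ideal.absNorm v.asIdeal ^ e * 2 := Nat.mul_le_mul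
        ((Nat.le_of_dvd (Nat.pos_of_ne_zero hunit₀) hle).trans hunit)
        (Nat.le_of_dvd two_pos hEV)
    _ = 4 * Ideal.absNorm v.asIdeal ^ e := by ring

omit he in
lemma mul_mem_localSquares_iff (h₂ : v.valuation K 2 = 1) {x y : Kˣ} (hx : v.valuation K x = 1)
    (hy : v.valuation K y = 1) :
    x * y ∈ localSquares (v.valuation K) ↔
      (x ∈ localSquares (v.valuation K) ↔ y ∈ localSquares (v.valuation K)) := by
  obtain ⟨h₀, h⟩ := localSquares_relIndex_unitGroup_le (v := v) (e := 0) (by simpa using h₂)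
  rw [pow_zero, mul_one] at h
  have hdvd : (localSquares (v.valuation K)).relIndex
      (v.valuation K).valuationSubring.unitGroup ∣ 2 := by
    interval_cases (localSquares (v.valuation K)).relIndex
      (v.valuation K).valuationSubring.unitGroup <;> simp_all
  have hxy := relIndex_dvd_two_iff_mul_mem.1 hdvd x
    ((Valuation.mem_unitGroup_iff ..).2 hx) y ((Valuation.mem_unitGroup_iff ..).2 hy)
  by_cases hx' : x ∈ localSquares (v.valuation K)
  · simp only [Subgroup.mul_mem_cancel_left _ hx', hx', true_iff]
  by_cases hy' : y ∈ localSquares (v.valuation K)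
  · simp only [Subgroup.mul_mem_cancel_right _ hy', hx', hy', iff_true]
  · simp only [hxy hx' hy', hx', hy']

end LocalIndex

/-! ### S-units -/

section Splitting

variable {G H : Type*} [CommGroup G]

lemma nonempty_ker_prod_mulEquiv [Group H] {f : G →* H} {s : H →* G}
    (h : Function.LeftInverse f s) : Nonempty (f.ker × H ≃* G) := by
  refine ⟨MulEquiv.ofBijective (f.ker.subtype.coprod s) ⟨?_, fun x => ?_⟩⟩
  · refine (injective_iff_map_eq_one _).2 fun ⟨⟨a, ha⟩, b⟩ hab => ?_
    replace hab : a * s b = 1 := hab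
    have hb : b = 1 := by simpa [MonoidHom.mem_ker.1 ha, h b] using congrArg f hab
    subst hb
    simpa using hab
  · refine ⟨⟨⟨x / s (f x), ?_⟩, f x⟩, div_mul_cancel x _⟩
    rw [MonoidHom.mem_ker, map_div, h, div_self']

lemma index_square_eq_of_ne_one {f : G →* Multiplicative ℤ} (hf : f ≠ 1) :
    (Subgroup.square G).index = (Subgroup.square f.ker).index * 2 := by
  have : Nontrivial f.range := by
    rwa [Subgroup.nontrivial_iff_ne_bot, Ne, MonoidHom.range_eq_bot_iff]
  have : Infinite f.range := by
    obtain ⟨x, hx⟩ := exists_ne (1 : f.range)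
    exact Set.infinite_univ_iff.1
      ((infinite_zpowers.2 (not_isOfFinOrder_of_isMulTorsionFree hx)).mono (Set.subset_univ _))
  let e : Multiplicative ℤ ≃* f.range := intCyclicMulEquiv
  let f' : G →* Multiplicative ℤ := e.symm.toMonoidHom.comp f.rangeRestrict
  obtain ⟨t, ht⟩ : ∃ t, f' t = Multiplicative.ofAdd 1 :=
    (e.symm.surjective.comp f.rangeRestrict_surjective) _
  have hker : f'.ker = f.ker := by
    ext x
    simp [f', MonoidHom.mem_ker]
  have hinv : Function.LeftInverse f' (zpowersHom G t) := fun n => by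
    rw [zpowersHom_apply, map_zpow, ht, ← ofAdd_zsmul, zsmul_one]
    rfl
  obtain ⟨φ⟩ := nonempty_ker_prod_mulEquiv hinv
  rw [← index_square_congr φ, index_square_prod, index_square_multiplicative_int, hker]

end Splitting

section SUnits

open IsDedekindDomain

variable {R : Type*} [CommRing R] [IsDedekindDomain R] (K : Type*) [Field K] [Algebra R K]
  [IsFractionRing R K]

/-- The `S`-units of `K` for a finite set `S` of primes. -/
noncomputable abbrev sUnits (S : Finset (HeightOneSpectrum R)) : Subgroup Kˣ :=
  (S : Set (HeightOneSpectrum R)).unit K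

variable {K}

lemma mem_sUnits {S : Finset (HeightOneSpectrum R)} {x : Kˣ} :
    x ∈ sUnits K S ↔ ∀ v ∉ S, v.valuation K (x : K) = 1 := Iff.rfl

lemma sUnits_mono {S T : Finset (HeightOneSpectrum R)} (h : S ⊆ T) : sUnits K S ≤ sUnits K T :=
  fun _ hx v hv => hx v fun hvS => hv (h hvS)

lemma isSquare_sUnits_iff {S : Finset (HeightOneSpectrum R)} {x : sUnits K S} :
    IsSquare x ↔ IsSquare ((x : Kˣ) : K) := by
  refine ⟨fun ⟨y, hy⟩ => ⟨(y : Kˣ), by rw [hy]; rfl⟩, fun ⟨y, hy⟩ => ?_⟩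
  have hy₀ : y ≠ 0 := left_ne_zero_of_mul (hy ▸ (x : Kˣ).ne_zero)
  refine ⟨⟨Units.mk0 y hy₀, mem_sUnits.2 fun v hv => ?_⟩, Subtype.ext (Units.ext hy)⟩
  have hxv := mem_sUnits.1 x.2 v hv
  rw [hy, ← sq, map_pow] at hxv
  exact (pow_eq_one_iff_of_nonneg zero_le two_ne_zero).1 hxv

lemma valuationOfNeZero_eq_one_iff {v : HeightOneSpectrum R} {x : Kˣ} :
    v.valuationOfNeZero x = 1 ↔ v.valuation K (x : K) = 1 := by
  rw [← v.valuationOfNeZero_eq, ← WithZero.coe_one, WithZero.coe_inj]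

lemma nonempty_units_mulEquiv_sUnits_empty :
    Nonempty (Rˣ ≃* sUnits K (∅ : Finset (HeightOneSpectrum R))) := by
  rw [sUnits, Finset.coe_empty]
  refine ⟨(Units.mapEquiv ?_).trans (Set.unitEquivUnitsInteger _ K).symm⟩
  rw [integer_empty]
  exact (Algebra.botEquivOfInjective (IsFractionRing.injective R K)).symm.toMulEquiv

lemma exists_mem_sUnits_singleton_valuation_ne_one [Finite (ClassGroup R)]
    (v : HeightOneSpectrum R) :
    ∃ x ∈ sUnits K {v}, v.valuation K (x : K) ≠ 1 := by
  let n := Nat.card (ClassGroup R)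
  have hn : n ≠ 0 := Nat.card_pos.ne'
  have hv : v.asIdeal ∈ nonZeroDivisors (Ideal R) := mem_nonZeroDivisors_iff_ne_zero.2 v.ne_bot
  obtain ⟨a, ha⟩ : (v.asIdeal ^ n).IsPrincipal := by
    rw [← ClassGroup.mk0_eq_one_iff (pow_mem hv n), ← SubmonoidClass.mk_pow _ hv, map_pow,
      pow_card_eq_one']
  have hmem : a ∈ v.asIdeal ^ n := ha ▸ Ideal.mem_span_singleton_self a
  have ha₀ : algebraMap R K a ≠ 0 := by
    rw [Ne, FaithfulSMul.algebraMap_eq_zero_iff]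
    rintro rfl
    exact pow_ne_zero n v.ne_bot (ha.trans (by simp))
  refine ⟨Units.mk0 _ ha₀, mem_sUnits.2 fun w hw => ?_, fun h => ?_⟩
  · refine w.valuation_eq_one_iff_notMem.2 fun haw => hw ?_
    have hle : v.asIdeal ≤ w.asIdeal := by
      refine w.isPrime.le_of_pow_le (n := n) ?_
      rw [ha]
      exact (Ideal.span_singleton_le_iff_mem _).2 haw
    simpa using (HeightOneSpectrum.ext (v.isMaximal.eq_of_le w.isPrime.ne_top hle)).symm
  · exact v.valuation_eq_one_iff_notMem.1 h (Ideal.pow_le_self hn hmem)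

lemma index_square_sUnits_insert [Finite (ClassGroup R)] [DecidableEq (HeightOneSpectrum R)]
    {S : Finset (HeightOneSpectrum R)} {v : HeightOneSpectrum R} (hv : v ∉ S) :
    (Subgroup.square (sUnits K (insert v S))).index =
      (Subgroup.square (sUnits K S)).index * 2 := by
  let f : sUnits K (insert v S) →* Multiplicative ℤ :=
    v.valuationOfNeZero.comp (sUnits K (insert v S)).subtype
  have hf : f ≠ 1 := fun h => by
    obtain ⟨x, hx, hxv⟩ := exists_mem_sUnits_singleton_valuation_ne_one (K := K) v
    have hx' : x ∈ sUnits K (insert v S) := sUnits_mono (by simp) hx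
    refine hxv (valuationOfNeZero_eq_one_iff.1 ?_)
    change f ⟨x, hx'⟩ = 1
    rw [h, MonoidHom.one_apply]
  have hker : f.ker = (sUnits K S).subgroupOf (sUnits K (insert v S)) := by
    ext x
    rw [MonoidHom.mem_ker, Subgroup.mem_subgroupOf]
    refine (valuationOfNeZero_eq_one_iff (x := (x : Kˣ))).trans
      ⟨fun h w hw => ?_, fun h => h v hv⟩
    rcases eq_or_ne w v with rfl | hwv
    · exact h
    · exact x.2 w (by simpa [hwv] using hw)
  rw [index_square_eq_of_ne_one hf, hker,
    index_square_congr (Subgroup.subgroupOfEquivOfLe (sUnits_mono (Finset.subset_insert v S)))]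

/-- Every nonzero ideal of `R` becomes principal in the ring of `S`-integers; the generator `c` is
described through its valuations at the primes outside `S`. -/
def PrincipalAway (K : Type*) [Field K] [Algebra R K] [IsFractionRing R K]
    (S : Finset (HeightOneSpectrum R)) : Prop :=
  ∀ I : Ideal R, I ≠ ⊥ → ∃ c : Kˣ, ∀ v ∉ S,
    IsGreatest ((fun a => v.valuation K (algebraMap R K a)) '' I) (v.valuation K (c : K))

lemma PrincipalAway.mono {S T : Finset (HeightOneSpectrum R)} (hS : PrincipalAway K S)
    (h : S ⊆ T) : PrincipalAway K T := fun I hI =>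
  let ⟨c, hc⟩ := hS I hI
  ⟨c, fun v hv => hc v fun hvS => hv (h hvS)⟩

lemma isGreatest_valuation_image_of_span_singleton_mul_eq {I J : Ideal R} {x y : R} (hx : x ≠ 0)
    (h : Ideal.span {x} * I = Ideal.span {y} * J) {v : HeightOneSpectrum R}
    (hJ : ¬ J ≤ v.asIdeal) :
    IsGreatest ((fun a => v.valuation K (algebraMap R K a)) '' I)
      (v.valuation K (algebraMap R K y / algebraMap R K x)) := by
  have hvx : 0 < v.valuation K (algebraMap R K x) := by
    rw [zero_lt_iff, Valuation.ne_zero_iff]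
    simpa using hx
  rw [map_div₀]
  constructor
  · obtain ⟨r, hr, hrv⟩ := SetLike.not_le_iff_exists.1 hJ
    have hyr : y * r ∈ Ideal.span {x} * I :=
      h ▸ Ideal.mul_mem_mul (Ideal.mem_span_singleton_self y) hr
    obtain ⟨i, hi, hxi⟩ := Ideal.mem_span_singleton_mul.1 hyr
    refine ⟨i, hi, ?_⟩
    rw [eq_div_iff hvx.ne', mul_comm, ← map_mul, ← map_mul, hxi, map_mul, map_mul,
      v.valuation_eq_one_iff_notMem.2 hrv, mul_one]
  · rintro _ ⟨a, ha, rfl⟩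
    have hxa : x * a ∈ Ideal.span {y} * J :=
      h ▸ Ideal.mul_mem_mul (Ideal.mem_span_singleton_self x) ha
    obtain ⟨z, -, hyz⟩ := Ideal.mem_span_singleton_mul.1 hxa
    rw [le_div_iff₀ hvx, mul_comm, ← map_mul, ← map_mul, ← hyz, map_mul, map_mul]
    exact mul_le_of_le_one_right' (v.valuation_le_one z)

lemma exists_principalAway [Finite (ClassGroup R)] (S₀ : Finset (HeightOneSpectrum R)) :
    ∃ S, S₀ ⊆ S ∧ PrincipalAway K S := by
  classical
  have := Fintype.ofFinite (ClassGroup R)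
  choose J hJ using ClassGroup.mk0_surjective (R := R)
  have hfin : ∀ c, {v : HeightOneSpectrum R | v.asIdeal ∣ (J c : Ideal R)}.Finite := fun c =>
    Ideal.finite_factors (nonZeroDivisors.ne_zero (J c).2)
  refine ⟨S₀ ∪ Finset.univ.biUnion fun c => (hfin c).toFinset, Finset.subset_union_left,
    fun I hI => ?_⟩
  let I' : nonZeroDivisors (Ideal R) := ⟨I, mem_nonZeroDivisors_iff_ne_zero.2 hI⟩
  obtain ⟨x, y, hx, hy, h⟩ := ClassGroup.mk0_eq_mk0_iff.1 (hJ (ClassGroup.mk0 I')).symm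
  have hxK : algebraMap R K x ≠ 0 := by simpa using hx
  have hyK : algebraMap R K y ≠ 0 := by simpa using hy
  refine ⟨Units.mk0 _ hyK / Units.mk0 _ hxK, fun v hv => ?_⟩
  rw [Units.val_div_eq_div_val, Units.val_mk0, Units.val_mk0]
  refine isGreatest_valuation_image_of_span_singleton_mul_eq hx h fun hle => hv ?_
  rw [Finset.mem_union, Finset.mem_biUnion]
  exact Or.inr ⟨_, Finset.mem_univ _, (hfin _).mem_toFinset.2 (Ideal.dvd_iff_le.2 hle)⟩

lemma PrincipalAway.exists_max_valuation_eq {S : Finset (HeightOneSpectrum R)}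
    (hS : PrincipalAway K S) {α β : K} (h : α ≠ 0 ∨ β ≠ 0) :
    ∃ c : Kˣ, ∀ v ∉ S, max (v.valuation K α) (v.valuation K β) = v.valuation K (c : K) := by
  classical
  obtain ⟨d, hd⟩ := IsLocalization.exist_integer_multiples_of_finset (nonZeroDivisors R)
    ({α, β} : Finset K)
  obtain ⟨a, ha⟩ := hd α (by simp)
  obtain ⟨b, hb⟩ := hd β (by simp)
  have hd₀ : algebraMap R K d ≠ 0 := by simp
  rw [Algebra.smul_def] at ha hb
  have hI : Ideal.span {a, b} ≠ ⊥ := fun hI => by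
    obtain ⟨rfl, rfl⟩ : a = 0 ∧ b = 0 := by simpa using Ideal.span_eq_bot.1 hI
    simp_all
  obtain ⟨c, hc⟩ := hS _ hI
  refine ⟨c / Units.mk0 _ hd₀, fun v hv => ?_⟩
  have hmax : max (v.valuation K (algebraMap R K a)) (v.valuation K (algebraMap R K b)) =
      v.valuation K (c : K) := by
    refine IsGreatest.unique ⟨?_, ?_⟩ (hc v hv)
    · rcases max_choice (v.valuation K (algebraMap R K a)) (v.valuation K (algebraMap R K b))
        with h | h <;> rw [h]
      · exact ⟨a, Ideal.subset_span (by simp), rfl⟩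
      · exact ⟨b, Ideal.subset_span (by simp), rfl⟩
    · rintro _ ⟨x, hx, rfl⟩
      obtain ⟨y, z, rfl⟩ := Ideal.mem_span_pair.1 hx
      simp only [map_add, map_mul]
      refine (Valuation.map_add _ _ _).trans (max_le_max ?_ ?_) <;> rw [map_mul]
      · exact mul_le_of_le_one_left' (v.valuation_le_one y)
      · exact mul_le_of_le_one_left' (v.valuation_le_one z)
  rw [Units.val_div_eq_div_val, map_div₀, ← hmax, Units.val_mk0, ha, hb, map_mul, map_mul]
  rw [← mul_max, mul_div_cancel_left₀]
  exact (Valuation.ne_zero_iff _).2 hd₀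

lemma PrincipalAway.exists_notMem_evenValuation {S : Finset (HeightOneSpectrum R)}
    (hS : PrincipalAway K S) {q : HeightOneSpectrum R} (hq : q ∉ S) :
    ∃ c : Kˣ, c ∉ evenValuation (q.valuation K) ∧ ∀ v ∉ S, v ≠ q → v.valuation K (c : K) = 1 := by
  obtain ⟨c, hc⟩ := hS q.asIdeal q.ne_bot
  refine ⟨c, fun hcq => ?_, fun v hv hvq => ?_⟩
  · obtain ⟨⟨i, hi, hic⟩, hmax⟩ := hc q hq
    obtain ⟨π, hπ⟩ := q.intValuation_exists_uniformizer
    rw [← q.valuation_of_algebraMap (K := K)] at hπ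
    have hcπ : q.valuation K (c : K) = WithZero.exp (-1) := by
      refine le_antisymm ?_ ?_
      · rw [← hic]
        exact (valuation_algebraMap_le_exp_iff q i 1).2 (by simpa using hi)
      · rw [← hπ]
        refine hmax ⟨π, ?_, rfl⟩
        simpa using (valuation_algebraMap_le_exp_iff (K := K) q π 1).1 hπ.le
    rw [mem_evenValuation_iff_even_log, hcπ, WithZero.log_exp] at hcq
    simp at hcq
  · obtain ⟨⟨i, -, hic⟩, hmax⟩ := hc v hv
    refine le_antisymm (hic ▸ v.valuation_le_one i) ?_
    have hle : ¬ q.asIdeal ≤ v.asIdeal := fun h =>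
      hvq (HeightOneSpectrum.ext (q.isMaximal.eq_of_le v.isPrime.ne_top h)).symm
    obtain ⟨j, hj, hjv⟩ := SetLike.not_le_iff_exists.1 hle
    exact (v.valuation_eq_one_iff_notMem.2 hjv).ge.trans (hmax ⟨j, hj, rfl⟩)

end SUnits

section NumberField

open IsDedekindDomain NumberField

variable (K : Type*) [Field K] [NumberField K]

lemma index_square_units :
    (Subgroup.square (𝓞 K)ˣ).index = 2 ^ Fintype.card (InfinitePlace K) := by
  let f : Units.torsion K × (Fin (Units.rank K) → Multiplicative ℤ) →* (𝓞 K)ˣ :=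
    (Units.torsion K).subtype.coprod
      (∏ i, (zpowersHom _ (Units.fundSystem K i)).comp (Pi.evalMonoidHom _ i))
  have hfp (p) : f p = p.1 * ∏ i, Units.fundSystem K i ^ (p.2 i).toAdd := by
    simp [f, MonoidHom.finsetProd_apply]
  have hf : Function.Bijective f := by
    refine (Function.bijective_iff_existsUnique f).2 fun x => ?_
    obtain ⟨p, hp, hunique⟩ := Units.exist_unique_eq_mul_prod K x
    refine ⟨(p.1, fun i => Multiplicative.ofAdd (p.2 i)), (hfp _).trans hp.symm, fun q hq => ?_⟩
    rw [← hunique (q.1, fun i => (q.2 i).toAdd) (hq.symm.trans (hfp q))]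
    rfl
  have htorsion : (Subgroup.square (Units.torsion K)).index = 2 := by
    rw [index_square_eq_card_ker, IsCyclic.card_powMonoidHom_ker]
    exact Nat.gcd_eq_right (even_iff_two_dvd.1 (Units.even_torsionOrder K))
  rw [← index_square_congr (MulEquiv.ofBijective f hf), index_square_prod, index_square_pi,
    index_square_multiplicative_int, htorsion, Fintype.card_fin, ← pow_succ', Units.rank,
    Nat.sub_add_cancel Fintype.card_pos]

variable {K}

lemma index_square_sUnits (S : Finset (HeightOneSpectrum (𝓞 K))) :
    (Subgroup.square (sUnits K S)).index = 2 ^ (S.card + Fintype.card (InfinitePlace K)) := by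
  classical
  induction S using Finset.induction_on with
  | empty =>
    obtain ⟨e⟩ := nonempty_units_mulEquiv_sUnits_empty (R := 𝓞 K) (K := K)
    rw [← index_square_congr e, index_square_units, Finset.card_empty, zero_add]
  | insert v S hv ih =>
    rw [index_square_sUnits_insert hv, ih, Finset.card_insert_of_notMem hv]
    ring

lemma prod_absNorm_pow_le_two_pow_finrank (S : Finset (HeightOneSpectrum (𝓞 K)))
    {e : HeightOneSpectrum (𝓞 K) → ℕ}
    (he : ∀ v ∈ S, v.valuation K 2 = WithZero.exp (-(e v : ℤ))) :
    ∏ v ∈ S, Ideal.absNorm v.asIdeal ^ e v ≤ 2 ^ Module.finrank ℚ K := by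
  have hdvd : ∏ v ∈ S, v.asIdeal ^ e v ∣ Ideal.span {(2 : 𝓞 K)} := by
    refine Finset.prod_dvd_of_coprime (fun v _ w _ hvw => IsCoprime.pow ?_) fun v hv => ?_
    · rw [Ideal.isCoprime_iff_sup_eq]
      exact v.isMaximal.coprime_of_ne w.isMaximal fun h => hvw (HeightOneSpectrum.ext h)
    · rw [Ideal.dvd_iff_le, Ideal.span_singleton_le_iff_mem,
        ← valuation_algebraMap_le_exp_iff (K := K), map_ofNat, he v hv]
  have hnorm := Ideal.absNorm_dvd_absNorm_of_le (Ideal.dvd_iff_le.1 hdvd)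
  have htwo : Ideal.absNorm (Ideal.span {(2 : 𝓞 K)}) = 2 ^ Module.finrank ℚ K := by
    rw [← RingOfIntegers.rank]
    exact_mod_cast Ideal.absNorm_span_natCast (S := 𝓞 K) 2
  simp only [htwo, map_prod, map_pow] at hnorm
  exact Nat.le_of_dvd (by positivity) hnorm

lemma iInf_localSquares_index_le (S : Finset (HeightOneSpectrum (𝓞 K))) :
    (⨅ v ∈ S, localSquares (v.valuation K)).index ≠ 0 ∧
      (⨅ v ∈ S, localSquares (v.valuation K)).index ≤ 4 ^ S.card * 2 ^ Module.finrank ℚ K := by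
  choose e he using fun v : HeightOneSpectrum (𝓞 K) => exists_valuation_two_eq_exp v
  have hS : ⨅ v ∈ S, localSquares (v.valuation K) =
      ⨅ v : S, localSquares ((v : HeightOneSpectrum (𝓞 K)).valuation K) := iInf_subtype'
  rw [hS]
  refine ⟨Subgroup.index_iInf_ne_zero fun v => (localSquares_index_le (he v)).1, ?_⟩
  calc _ ≤ ∏ v : S, (localSquares ((v : HeightOneSpectrum (𝓞 K)).valuation K)).index :=
        Subgroup.index_iInf_le _
    _ ≤ ∏ v : S, 4 * Ideal.absNorm (v : HeightOneSpectrum (𝓞 K)).asIdeal ^ e v :=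
        Finset.prod_le_prod' fun v _ => (localSquares_index_le (he v)).2
    _ = 4 ^ S.card * ∏ v ∈ S, Ideal.absNorm v.asIdeal ^ e v := by
        rw [Finset.prod_coe_sort S fun v => 4 * Ideal.absNorm v.asIdeal ^ e v,
          Finset.prod_mul_distrib, Finset.prod_const]
    _ ≤ 4 ^ S.card * 2 ^ Module.finrank ℚ K :=
        Nat.mul_le_mul_left _ (prod_absNorm_pow_le_two_pow_finrank S fun v _ => he v)

end NumberField

/-! ### Quadratic extensions -/

section PrimeBelow

open IsDedekindDomain NumberField

variable {K L M : Type*} [Field K] [Field L] [Field M]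

/-- The prime of `K` below the prime `w` of `L` along `f`. The embedding is an explicit argument so
that automorphisms of a single field are covered. -/
noncomputable def primeBelow (f : K →+* L) (w : HeightOneSpectrum (𝓞 L)) :
    HeightOneSpectrum (𝓞 K) :=
  letI := f.toAlgebra
  w.under (𝓞 K)

lemma primeBelow_comp (f : K →+* L) (g : L →+* M) (w : HeightOneSpectrum (𝓞 M)) :
    primeBelow (g.comp f) w = primeBelow f (primeBelow g w) := rfl

variable [NumberField K] (f : K →+* L)

lemma primeBelow_surjective : Function.Surjective (primeBelow f) := fun v => by
  let _ := f.toAlgebra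
  have := v.isMaximal
  obtain ⟨P, hP, hPv⟩ := Ideal.exists_maximal_ideal_liesOver_of_isIntegral (S := 𝓞 L) v.asIdeal
  exact ⟨⟨P, hP.isPrime, Ideal.ne_bot_of_liesOver_of_ne_bot v.ne_bot P⟩,
    HeightOneSpectrum.ext hPv.over.symm⟩

variable [NumberField L]

lemma exists_valuation_primeBelow_pow_eq (w : HeightOneSpectrum (𝓞 L)) :
    ∃ e : ℕ, e ≠ 0 ∧ ∀ x : K, (primeBelow f w).valuation K x ^ e = w.valuation L (f x) := by
  let _ := f.toAlgebra
  have : w.asIdeal.LiesOver (w.under (𝓞 K)).asIdeal := ⟨rfl⟩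
  exact ⟨_, Ideal.IsDedekindDomain.ramificationIdx'_ne_zero_of_liesOver w.asIdeal
    (w.under (𝓞 K)).ne_bot, HeightOneSpectrum.valuation_liesOver L (w.under (𝓞 K)) w⟩

variable {f}

lemma valuation_map_le_iff {w : HeightOneSpectrum (𝓞 L)} {x y : K} :
    w.valuation L (f x) ≤ w.valuation L (f y) ↔
      (primeBelow f w).valuation K x ≤ (primeBelow f w).valuation K y := by
  obtain ⟨e, he, h⟩ := exists_valuation_primeBelow_pow_eq f w
  rw [← h, ← h, pow_le_pow_iff_left₀ zero_le zero_le he]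

lemma valuation_map_lt_iff {w : HeightOneSpectrum (𝓞 L)} {x y : K} :
    w.valuation L (f x) < w.valuation L (f y) ↔
      (primeBelow f w).valuation K x < (primeBelow f w).valuation K y := by
  rw [← not_le, ← not_le, valuation_map_le_iff]

lemma valuation_map_eq_iff {w : HeightOneSpectrum (𝓞 L)} {x y : K} :
    w.valuation L (f x) = w.valuation L (f y) ↔
      (primeBelow f w).valuation K x = (primeBelow f w).valuation K y := by
  rw [le_antisymm_iff, le_antisymm_iff, valuation_map_le_iff, valuation_map_le_iff]

lemma valuation_map_eq_one_iff {w : HeightOneSpectrum (𝓞 L)} {x : K} :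
    w.valuation L (f x) = 1 ↔ (primeBelow f w).valuation K x = 1 := by
  simpa using valuation_map_eq_iff (f := f) (w := w) (x := x) (y := 1)

variable (f)

lemma finite_setOf_primeBelow_mem (S : Finset (HeightOneSpectrum (𝓞 K))) :
    {w | primeBelow f w ∈ S}.Finite := by
  let _ := f.toAlgebra
  refine S.finite_toSet.preimage' fun v _ => ?_
  have := v.isMaximal
  refine ((IsDedekindDomain.primesOver_finite v.asIdeal (𝓞 L)).preimage
    (HeightOneSpectrum.asIdeal_injective.injOn)).subset ?_
  rintro w rfl
  exact ⟨w.isPrime, ⟨rfl⟩⟩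

/-- The primes of `L` above the primes in `S`. -/
noncomputable def primesAbove (S : Finset (HeightOneSpectrum (𝓞 K))) :
    Finset (HeightOneSpectrum (𝓞 L)) :=
  (finite_setOf_primeBelow_mem f S).toFinset

variable {f}

@[simp]
lemma mem_primesAbove {S : Finset (HeightOneSpectrum (𝓞 K))} {w : HeightOneSpectrum (𝓞 L)} :
    w ∈ primesAbove f S ↔ primeBelow f w ∈ S := by
  simp [primesAbove]

lemma map_mem_sUnits_primesAbove_iff {S : Finset (HeightOneSpectrum (𝓞 K))} {x : Kˣ} :
    Units.map (f : K →* L) x ∈ sUnits L (primesAbove f S) ↔ x ∈ sUnits K S := by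
  rw [mem_sUnits, mem_sUnits, (primeBelow_surjective f).forall]
  simp only [mem_primesAbove]
  exact forall₂_congr fun w _ => valuation_map_eq_one_iff

variable (f) in
/-- The map induced by `f` on `S`-units. -/
noncomputable def sUnitsMap (S : Finset (HeightOneSpectrum (𝓞 K))) :
    sUnits K S →* sUnits L (primesAbove f S) :=
  ((Units.map (f : K →* L)).comp (Subgroup.subtype _)).codRestrict _ fun x =>
    map_mem_sUnits_primesAbove_iff.2 x.2

end PrimeBelow

lemma finrank_rat_eq_two_mul_card_infinitePlace {K : Type*} [Field K] [NumberField K]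
    [NumberField.IsTotallyComplex K] :
    Module.finrank ℚ K = 2 * Fintype.card (NumberField.InfinitePlace K) := by
  rw [NumberField.IsTotallyComplex.finrank,
    NumberField.InfinitePlace.card_eq_nrRealPlaces_add_nrComplexPlaces,
    NumberField.IsTotallyComplex.nrRealPlaces_eq_zero, zero_add]

/-- `L = K(√u)` is a quadratic extension, with a chosen square root of `u` and the conjugation. -/
structure SqrtExtension (K L : Type*) [Field K] [Field L] [Algebra K L] (u : K) where
  root : L
  root_sq : root ^ 2 = algebraMap K L u
  exists_eq_add_mul_root : ∀ z : L, ∃ a b : K, z = algebraMap K L a + algebraMap K L b * root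
  conj : L ≃ₐ[K] L
  conj_root : conj root = -root
  finrank_eq_two : Module.finrank K L = 2

open Polynomial in
lemma nonempty_sqrtExtension_adjoinRoot {K : Type*} [Field K] {u : K}
    [Fact (Irreducible (X ^ 2 - C u))] :
    Nonempty (SqrtExtension K (AdjoinRoot (X ^ 2 - C u)) u) := by
  have hmonic : (X ^ 2 - C u).Monic := monic_X_pow_sub_C u two_ne_zero
  have hdeg : (X ^ 2 - C u).natDegree = 2 := natDegree_X_pow_sub_C
  have : Module.Finite K (AdjoinRoot (X ^ 2 - C u)) := hmonic.finite_adjoinRoot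
  let r := AdjoinRoot.root (X ^ 2 - C u)
  have hr : r ^ 2 = algebraMap K _ u := root_X_pow_sub_C_pow 2 u
  let σ : AdjoinRoot (X ^ 2 - C u) →ₐ[K] AdjoinRoot (X ^ 2 - C u) :=
    AdjoinRoot.liftAlgHom _ (Algebra.ofId K _) (-r) (by simp [hr])
  have hσ : σ r = -r := AdjoinRoot.liftAlgHom_root ..
  refine ⟨⟨r, hr, fun z => ?_, .ofBijective σ (Algebra.IsAlgebraic.algHom_bijective σ), hσ,
    ?_⟩⟩
  · obtain ⟨p, hp, rfl⟩ := (AdjoinRoot.powerBasis hmonic.ne_zero).exists_eq_aeval z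
    obtain ⟨b, a, rfl⟩ := exists_eq_X_add_C_of_natDegree_le_one (p := p) (by
      rw [AdjoinRoot.powerBasis_dim, hdeg] at hp
      omega)
    exact ⟨a, b, by simp [r, add_comm]⟩
  · rw [(AdjoinRoot.powerBasis hmonic.ne_zero).finrank, AdjoinRoot.powerBasis_dim, hdeg]

theorem exists_numberField_sqrtExtension.{w} {K : Type w} [Field K] [NumberField K] {u : K}
    (hu : ¬ IsSquare u) :
    ∃ (L : Type w) (_ : Field L) (_ : NumberField L) (_ : Algebra K L),
      Nonempty (SqrtExtension K L u) := by
  have hirr : Irreducible (Polynomial.X ^ 2 - Polynomial.C u) :=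
    X_pow_sub_C_irreducible_of_prime Nat.prime_two fun b hb => hu ⟨b, by rw [← hb, sq]⟩
  have : Fact (Irreducible (Polynomial.X ^ 2 - Polynomial.C u)) := ⟨hirr⟩
  have := (Polynomial.monic_X_pow_sub_C u two_ne_zero).finite_adjoinRoot
  exact ⟨_, _, NumberField.of_module_finite K _, _, nonempty_sqrtExtension_adjoinRoot⟩

namespace SqrtExtension

variable {K L : Type*} [Field K] [Field L] [Algebra K L] {u : K} (q : SqrtExtension K L u)

include q in
lemma isQuadraticExtension : Algebra.IsQuadraticExtension K L := ⟨q.finrank_eq_two⟩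

lemma root_ne_zero (hu : u ≠ 0) : q.root ≠ 0 := by
  rw [← pow_ne_zero_iff two_ne_zero, q.root_sq]
  simpa using hu

lemma algebraMap_norm [CharZero K] (hu : u ≠ 0) (z : L) :
    algebraMap K L (Algebra.norm K z) = z * q.conj z := by
  classical
  have := q.isQuadraticExtension
  have : CharZero L := charZero_of_injective_algebraMap (algebraMap K L).injective
  have hne : 1 ≠ q.conj := fun h => q.root_ne_zero hu <| self_eq_neg.1 <| by
    conv_rhs => rw [← q.conj_root, ← h, AlgEquiv.one_apply]
  have huniv : ({1, q.conj} : Finset (L ≃ₐ[K] L)) = Finset.univ := by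
    rw [← Finset.card_eq_iff_eq_univ, Finset.card_pair hne, ← Nat.card_eq_fintype_card,
      IsGalois.card_aut_eq_finrank, q.finrank_eq_two]
  rw [Algebra.norm_eq_prod_automorphisms, ← huniv, Finset.prod_pair hne, AlgEquiv.one_apply]

include q in
lemma norm_mem_normGroup [CharZero K] (hu : u ≠ 0) (z : Lˣ) :
    Units.map (Algebra.norm K) z ∈ normGroup u := by
  obtain ⟨a, b, hz⟩ := q.exists_eq_add_mul_root z
  refine ⟨a, b, (algebraMap K L).injective ?_⟩
  rw [Units.coe_map, q.algebraMap_norm hu, hz]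
  simp only [map_add, map_mul, map_sub, map_pow, AlgEquiv.commutes, q.conj_root, ← q.root_sq]
  ring

lemma exists_mul_conj_eq (hu : u ≠ 0) {y : L} (hy : y * q.conj y = 1) :
    ∃ z ≠ 0, y * q.conj z = z := by
  by_cases h : 1 + y = 0
  · refine ⟨q.root, q.root_ne_zero hu, ?_⟩
    rw [q.conj_root, eq_neg_of_add_eq_zero_right h, neg_mul_neg, one_mul]
  · refine ⟨1 + y, h, ?_⟩
    rw [map_add, map_one, mul_add, hy, mul_one, add_comm]

lemma valuation_eq_max_of_valuation_conj_eq {Γ₀ : Type*} [LinearOrderedCommGroupWithZero Γ₀]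
    {v : Valuation L Γ₀} (h₂ : v 2 = 1) (hu : v (algebraMap K L u) = 1) {a b : K}
    (h : v (q.conj (algebraMap K L a + algebraMap K L b * q.root)) =
      v (algebraMap K L a + algebraMap K L b * q.root)) :
    v (algebraMap K L a + algebraMap K L b * q.root) =
      max (v (algebraMap K L a)) (v (algebraMap K L b)) := by
  set z := algebraMap K L a + algebraMap K L b * q.root with hz
  have hroot : v q.root = 1 := by
    rw [← q.root_sq, map_pow] at hu
    exact (pow_eq_one_iff_of_nonneg zero_le two_ne_zero).1 hu
  have hconj : q.conj z = algebraMap K L a - algebraMap K L b * q.root := by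
    simp [hz, q.conj_root, sub_eq_add_neg]
  refine le_antisymm ?_ (max_le ?_ ?_)
  · exact (v.map_add _ _).trans_eq (by rw [map_mul v, hroot, mul_one])
  · calc v (algebraMap K L a) = v (z + q.conj z) := by
          rw [hconj, hz, add_add_sub_cancel, ← two_mul, map_mul v, h₂, one_mul]
      _ ≤ v z := v.map_add_le le_rfl h.le
  · calc v (algebraMap K L b) = v (z - q.conj z) := by
          rw [hconj, hz, add_sub_sub_cancel, ← two_mul, map_mul v, map_mul v, h₂, hroot,
            one_mul, mul_one]
      _ ≤ v z := v.map_sub_le le_rfl h.le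

end SqrtExtension

section SUnitNorm

open IsDedekindDomain NumberField

variable {K L : Type*} [Field K] [Field L] [Algebra K L]

namespace SqrtExtension

lemma primeBelow_conj {u : K} (q : SqrtExtension K L u) (w : HeightOneSpectrum (𝓞 L)) :
    primeBelow (algebraMap K L) (primeBelow (q.conj : L →+* L) w) =
      primeBelow (algebraMap K L) w := by
  rw [← primeBelow_comp]
  congr 1
  ext x
  exact q.conj.commutes x

variable [NumberField K] [NumberField L] {u : Kˣ} (q : SqrtExtension K L (u : K))

lemma conj_mem_sUnits {S : Finset (HeightOneSpectrum (𝓞 K))} {y : Lˣ}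
    (hy : y ∈ sUnits L (primesAbove (algebraMap K L) S)) :
    Units.map (q.conj : L →* L) y ∈ sUnits L (primesAbove (algebraMap K L) S) := by
  refine mem_sUnits.2 fun w hw => ?_
  refine valuation_map_eq_one_iff (f := (q.conj : L →+* L)).2 (mem_sUnits.1 hy _ ?_)
  rwa [mem_primesAbove, q.primeBelow_conj, ← mem_primesAbove]

lemma primeBelow_conj_ne {w : HeightOneSpectrum (𝓞 L)}
    (hu : u ∈ localSquares ((primeBelow (algebraMap K L) w).valuation K)) :
    primeBelow (q.conj : L →+* L) w ≠ w := fun h => by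
  obtain ⟨y, hy⟩ := hu
  have hyu : w.valuation L (algebraMap K L y) ^ 2 = w.valuation L (algebraMap K L u) := by
    rw [← map_pow, ← map_pow, valuation_map_eq_iff]
    exact Valuation.map_eq_of_sub_lt _ (lt_of_lt_four_mul hy)
  -- `θ` and its conjugate are the roots of the separable polynomial `X² - yX + (y² - u) / 4`.
  let θ : L := (algebraMap K L y + q.root) / 2
  have hsum : θ + q.conj θ = algebraMap K L y := by
    simp only [θ, map_div₀, map_add, AlgEquiv.commutes, q.conj_root, map_ofNat]
    ring
  have hprod : 4 * (θ * q.conj θ) = algebraMap K L (y ^ 2 - u) := by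
    simp only [θ, map_div₀, map_add, AlgEquiv.commutes, q.conj_root, map_ofNat, map_sub, map_pow,
      ← q.root_sq]
    ring
  have hconj : w.valuation L (q.conj θ) < w.valuation L (algebraMap K L y) ↔
      w.valuation L θ < w.valuation L (algebraMap K L y) := by
    have := valuation_map_lt_iff (f := (q.conj : L →+* L)) (w := w) (x := θ)
      (y := algebraMap K L y)
    rw [h] at this
    simpa using this
  have hlt : w.valuation L θ * w.valuation L (q.conj θ) < w.valuation L (algebraMap K L u) := by
    rw [← valuation_map_lt_iff (f := algebraMap K L), ← hprod, map_mul (algebraMap K L), map_ofNat,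
      map_mul _ (4 : L), map_mul _ (4 : L), map_mul] at hy
    exact lt_of_mul_lt_mul_left' hy
  by_cases hθ : w.valuation L θ < w.valuation L (algebraMap K L y)
  · exact (hsum ▸ Valuation.map_add_lt _ hθ (hconj.2 hθ)).false
  · refine hlt.not_ge ?_
    rw [← hyu, sq]
    exact mul_le_mul' (not_lt.1 hθ) (not_lt.1 (mt hconj.1 hθ))

include q in
lemma card_add_card_le_card_primesAbove {S T : Finset (HeightOneSpectrum (𝓞 K))} (hTS : T ⊆ S)
    (hT : ∀ v ∈ T, u ∈ localSquares (v.valuation K)) :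
    S.card + T.card ≤ (primesAbove (algebraMap K L) S).card := by
  classical
  have hST : S.card + T.card = ∑ v ∈ S, (1 + if v ∈ T then 1 else 0) := by
    rw [Finset.sum_add_distrib, Finset.sum_ite_mem, Finset.inter_eq_right.2 hTS]
    simp
  rw [Finset.card_eq_sum_card_fiberwise (f := primeBelow (algebraMap K L)) (t := S)
    fun w hw => mem_primesAbove.1 hw, hST]
  refine Finset.sum_le_sum fun v hv => ?_
  obtain ⟨w, rfl⟩ := primeBelow_surjective (algebraMap K L) v
  split_ifs with hvT
  · refine Finset.one_lt_card.2 ⟨w, by simp [hv], primeBelow (q.conj : L →+* L) w, ?_,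
      (q.primeBelow_conj_ne (hT _ hvT)).symm⟩
    simp [hv, q.primeBelow_conj]
  · exact Finset.card_pos.2 ⟨w, by simp [hv]⟩

lemma exists_mem_sUnits_mul_conj_eq {S : Finset (HeightOneSpectrum (𝓞 K))}
    (h₂ : ∀ v ∉ S, v.valuation K 2 = 1) (hS : PrincipalAway K S) (hu : u ∈ sUnits K S) {y : Lˣ}
    (hy : y ∈ sUnits L (primesAbove (algebraMap K L) S)) (hyconj : (y : L) * q.conj y = 1) :
    ∃ z ∈ sUnits L (primesAbove (algebraMap K L) S), (y : L) * q.conj z = z := by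
  obtain ⟨z, hz, hyz⟩ := q.exists_mul_conj_eq u.ne_zero hyconj
  obtain ⟨a, b, hab⟩ := q.exists_eq_add_mul_root z
  have hab₀ : a ≠ 0 ∨ b ≠ 0 := by
    by_contra! h
    simp [hab, h] at hz
  obtain ⟨c, hc⟩ := hS.exists_max_valuation_eq hab₀
  have hc₀ : algebraMap K L c ≠ 0 := by simp
  refine ⟨Units.mk0 (z / algebraMap K L c) (div_ne_zero hz hc₀), mem_sUnits.2 fun w hw => ?_, ?_⟩
  · have hwS : primeBelow (algebraMap K L) w ∉ S := by rwa [← mem_primesAbove]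
    have hwz : w.valuation L z = w.valuation L (algebraMap K L c) := by
      have hw₂ : w.valuation L 2 = 1 := by
        simpa [map_ofNat] using (valuation_map_eq_one_iff (f := algebraMap K L)).2 (h₂ _ hwS)
      have hwconj : w.valuation L (q.conj z) = w.valuation L z := by
        conv_rhs => rw [← hyz, map_mul, mem_sUnits.1 hy w hw, one_mul]
      obtain ⟨e, -, he⟩ := exists_valuation_primeBelow_pow_eq (algebraMap K L) w
      rw [hab, q.valuation_eq_max_of_valuation_conj_eq hw₂
        (valuation_map_eq_one_iff.2 (hu _ hwS)) (hab ▸ hwconj), ← he, ← he, ← he, ← hc _ hwS]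
      exact (pow_left_mono e).map_max.symm
    rw [Units.val_mk0, map_div₀, hwz, div_self ((Valuation.ne_zero_iff _).2 hc₀)]
  · rw [Units.val_mk0, map_div₀, q.conj.commutes, ← mul_div_assoc, hyz]

/-- The norm `L → K` on `S`-units. -/
noncomputable def sUnitsNorm (S : Finset (HeightOneSpectrum (𝓞 K))) :
    sUnits L (primesAbove (algebraMap K L) S) →* sUnits K S :=
  ((Units.map (Algebra.norm K)).comp (Subgroup.subtype _)).codRestrict _ fun y => by
    rw [← map_mem_sUnits_primesAbove_iff (f := algebraMap K L)]
    convert mul_mem y.2 (q.conj_mem_sUnits y.2) using 1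
    ext
    exact q.algebraMap_norm u.ne_zero _

lemma mem_range_sup_square_of_isSquare_norm {S : Finset (HeightOneSpectrum (𝓞 K))}
    (h₂ : ∀ v ∉ S, v.valuation K 2 = 1) (hS : PrincipalAway K S) (hu : u ∈ sUnits K S)
    {y : sUnits L (primesAbove (algebraMap K L) S)} (hy : IsSquare (q.sUnitsNorm S y)) :
    y ∈ (sUnitsMap (algebraMap K L) S).range ⊔ Subgroup.square _ := by
  obtain ⟨b, hb⟩ := hy
  let j := sUnitsMap (algebraMap K L) S
  have hj (x : sUnits K S) : ((j x : Lˣ) : L) = algebraMap K L (x : Kˣ) := rfl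
  have hN (z : sUnits L (primesAbove (algebraMap K L) S)) :
      algebraMap K L (q.sUnitsNorm S z : Kˣ) = (z : Lˣ) * q.conj (z : Lˣ) :=
    q.algebraMap_norm u.ne_zero _
  have hyb : ((y : Lˣ) : L) * q.conj (y : Lˣ) =
      algebraMap K L (b : Kˣ) * algebraMap K L (b : Kˣ) := by
    rw [← hN, hb, ← map_mul]
    rfl
  have hb₀ : algebraMap K L (b : Kˣ) ≠ 0 := by simp
  obtain ⟨z, hz, hyz⟩ := q.exists_mem_sUnits_mul_conj_eq h₂ hS hu (y / j b).2 <| by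
    rw [Subgroup.coe_div, Units.val_div_eq_div_val, hj, map_div₀, q.conj.commutes, div_mul_div_comm,
      hyb, div_self (mul_ne_zero hb₀ hb₀)]
  lift z to sUnits L (primesAbove (algebraMap K L) S) using hz
  have hy_eq : y = j (b / q.sUnitsNorm S z) * z ^ 2 := by
    have hz₀ : q.conj (z : Lˣ) ≠ 0 := by simp
    ext
    push_cast at hyz ⊢
    rw [hj, div_mul_eq_mul_div, div_eq_iff hb₀] at hyz
    rw [hj, Subgroup.coe_div, Units.val_div_eq_div_val, map_div₀, hN]
    field_simp
    rw [hyz, mul_comm]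
  rw [hy_eq]
  exact Subgroup.mul_mem_sup ⟨_, rfl⟩ (Subgroup.mem_square.2 (even_two.isSquare_pow _))

include q in
lemma isSquare_sUnitsMap {S : Finset (HeightOneSpectrum (𝓞 K))} (hu : u ∈ sUnits K S) :
    IsSquare (sUnitsMap (algebraMap K L) S ⟨u, hu⟩) :=
  isSquare_sUnits_iff.2 ⟨q.root, q.root_sq.symm.trans (sq _)⟩

include q in
lemma card_infinitePlace_eq [IsTotallyComplex K] :
    Fintype.card (InfinitePlace L) = 2 * Fintype.card (InfinitePlace K) := by
  have := isTotallyComplex_of_algebra K L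
  have hKL := Module.finrank_mul_finrank ℚ K L
  rw [q.finrank_eq_two, finrank_rat_eq_two_mul_card_infinitePlace,
    finrank_rat_eq_two_mul_card_infinitePlace] at hKL
  lia

end SqrtExtension

theorem normGroup_relIndex_sUnits_mul_le [NumberField K] [IsTotallyComplex K]
    {S T : Finset (HeightOneSpectrum (𝓞 K))} (h₂ : ∀ v ∉ S, v.valuation K 2 = 1)
    (hS : PrincipalAway K S) {u : Kˣ} (hu : u ∈ sUnits K S) (husq : ¬ IsSquare (u : K))
    (hTS : T ⊆ S) (hT : ∀ v ∈ T, u ∈ localSquares (v.valuation K)) :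
    (normGroup (u : K)).relIndex (sUnits K S) ≠ 0 ∧
      (normGroup (u : K)).relIndex (sUnits K S) * 2 ^ (T.card + 1) ≤ 2 ^ S.card := by
  obtain ⟨L, _, _, _, ⟨q⟩⟩ := exists_numberField_sqrtExtension husq
  have hNj (x : sUnits K S) : q.sUnitsNorm S (sUnitsMap (algebraMap K L) S x) = x ^ 2 := by
    ext
    change Algebra.norm K (algebraMap K L (x : Kˣ)) = _
    rw [Algebra.norm_algebraMap, q.finrank_eq_two]
    rfl
  have hnorm : (q.sUnitsNorm S).range ≤ (normGroup (u : K)).subgroupOf (sUnits K S) := by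
    rintro _ ⟨y, rfl⟩
    exact q.norm_mem_normGroup u.ne_zero y
  have husq' : ¬ IsSquare (⟨u, hu⟩ : sUnits K S) := mt isSquare_sUnits_iff.1 husq
  have hindex := index_range_mul_index_square_mul_two_le _ _ hNj
    (fun y hy => q.mem_range_sup_square_of_isSquare_norm h₂ hS hu hy) husq'
    (q.isSquare_sUnitsMap hu) (by rw [index_square_sUnits]; positivity)
  rw [index_square_sUnits, index_square_sUnits, q.card_infinitePlace_eq] at hindex
  have hdvd := Subgroup.index_dvd_of_le hnorm
  have hR : (q.sUnitsNorm S).range.index ≠ 0 := by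
    refine ne_zero_of_dvd_ne_zero ?_ (Subgroup.index_dvd_of_le (H := Subgroup.square _) ?_)
    · rw [index_square_sUnits]
      positivity
    · rintro x hx
      obtain ⟨b, rfl⟩ := Subgroup.mem_square.1 hx
      exact ⟨_, (hNj b).trans (sq b)⟩
  refine ⟨ne_zero_of_dvd_ne_zero hR hdvd, ?_⟩
  refine (Nat.mul_le_mul_right _ (Nat.le_of_dvd (Nat.pos_of_ne_zero hR) hdvd)).trans ?_
  have hcard := q.card_add_card_le_card_primesAbove hTS hT
  set ρ := Fintype.card (InfinitePlace K)
  refine Nat.le_of_mul_le_mul_right (c := 2 ^ (S.card + 2 * ρ)) ?_ (by positivity)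
  calc (q.sUnitsNorm S).range.index * 2 ^ (T.card + 1) * 2 ^ (S.card + 2 * ρ)
      = (q.sUnitsNorm S).range.index * 2 ^ (S.card + T.card + 2 * ρ) * 2 := by ring
    _ ≤ (q.sUnitsNorm S).range.index *
        2 ^ ((primesAbove (algebraMap K L) S).card + 2 * ρ) * 2 := by gcongr; norm_num
    _ ≤ 2 ^ S.card * 2 ^ (S.card + 2 * ρ) := hindex.trans_eq (by ring)

end SUnitNorm

/-! ### Counting multisets of bounded norm -/

section Counting

open Filter Topology

lemma exists_mul_half_le_sum_inv {ι : Type*} {A : Set ι} {f : ι → ℝ} (hf : ∀ i, 0 < f i)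
    (hfin : ∀ x, {i ∈ A | f i ≤ x}.Finite) {δ : ℝ} (hδ : 0 < δ)
    (h : ∀ᶠ x in atTop, δ * x ≤ {i ∈ A | f i ≤ x}.ncard) (n : ℕ) :
    ∃ F : Finset ι, (∀ i ∈ F, i ∈ A) ∧ n * (δ / 2) ≤ ∑ i ∈ F, (f i)⁻¹ := by
  classical
  induction n with
  | zero => exact ⟨∅, by simp⟩
  | succ n ih =>
    obtain ⟨F, hFA, hF⟩ := ih
    obtain ⟨x, hx, hxF, hx₀⟩ := (h.and
      ((eventually_ge_atTop (2 * F.card / δ)).and (eventually_gt_atTop 0))).exists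
    set G := (hfin x).toFinset
    rw [Set.ncard_eq_toFinset_card _ (hfin x)] at hx
    have hcard : δ / 2 * x ≤ (G \ F).card := by
      have hGF : (G.card : ℝ) ≤ (G \ F).card + F.card := by
        exact_mod_cast Nat.sub_le_iff_le_add.1 (Finset.le_card_sdiff F G)
      rw [div_le_iff₀ hδ] at hxF
      linarith
    have hsum : (G \ F).card • x⁻¹ ≤ ∑ i ∈ G \ F, (f i)⁻¹ :=
      Finset.card_nsmul_le_sum _ _ _ fun i hi => inv_anti₀ (hf i)
        ((hfin x).mem_toFinset.1 (Finset.mem_sdiff.1 hi).1).2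
    refine ⟨F ∪ G, fun i hi => ?_, ?_⟩
    · exact (Finset.mem_union.1 hi).elim (hFA i) fun hi => ((hfin x).mem_toFinset.1 hi).1
    · rw [← le_div_iff₀ hx₀, div_eq_mul_inv (_ : ℝ) x, ← nsmul_eq_mul] at hcard
      rw [← Finset.union_sdiff_self_eq_union, Finset.sum_union Finset.disjoint_sdiff]
      push_cast
      linarith

variable {X Y : Type*}

lemma injOn_multiset_map {f : X → Y} {A : Set X} (hf : Set.InjOn f A) :
    Set.InjOn (Multiset.map f) {m | ∀ p ∈ m, p ∈ A} := by
  cases isEmpty_or_nonempty X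
  · exact Set.injOn_of_subsingleton _ _
  refine Set.LeftInvOn.injOn (f₁' := Multiset.map (Function.invFunOn f A)) fun m hm => ?_
  rw [Multiset.map_map]
  exact (Multiset.map_congr rfl fun p hp => hf.leftInvOn_invFunOn (hm p hp)).trans
    (Multiset.map_id' m)

lemma injOn_multiset_map_add_map {f g : X → Y} {A : Set X} (hf : Set.InjOn f A)
    (hg : Set.InjOn g A) (hfg : ∀ p ∈ A, ∀ q ∈ A, f p ≠ g q) :
    Set.InjOn (fun m : Multiset X × Multiset X => m.1.map f + m.2.map g)
      {m | (∀ p ∈ m.1, p ∈ A) ∧ ∀ p ∈ m.2, p ∈ A} := by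
  have hinj : Set.InjOn (Sum.elim f g) {z | z.elim (· ∈ A) (· ∈ A)} := by
    rintro (p | p) hp (q | q) hq h
    · exact congrArg _ (hf hp hq h)
    · exact (hfg p hp q hq h).elim
    · exact (hfg q hq p hp h.symm).elim
    · exact congrArg _ (hg hp hq h)
  have hnone (m : Multiset X) : m.filterMap (fun _ => (none : Option X)) = 0 :=
    Multiset.eq_zero_of_forall_notMem (by simp)
  have hleft (m m' : Multiset X) : (m.disjSum m').filterMap Sum.getLeft? = m := by
    simp [Multiset.disjSum, Multiset.filterMap_map, Function.comp_def, hnone]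
  have hright (m m' : Multiset X) : (m.disjSum m').filterMap Sum.getRight? = m' := by
    simp [Multiset.disjSum, Multiset.filterMap_map, Function.comp_def, hnone]
  have hmem {m : Multiset X × Multiset X} (hm : (∀ p ∈ m.1, p ∈ A) ∧ ∀ p ∈ m.2, p ∈ A) :
      ∀ z ∈ m.1.disjSum m.2, z.elim (· ∈ A) (· ∈ A) := by
    rintro (p | p) hp
    · exact hm.1 p (Multiset.inl_mem_disjSum.1 hp)
    · exact hm.2 p (Multiset.inr_mem_disjSum.1 hp)
  intro m hm n hn h
  have hmn : m.1.disjSum m.2 = n.1.disjSum n.2 :=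
    injOn_multiset_map hinj (hmem hm) (hmem hn) (by simpa [Multiset.map_disjSum] using h)
  refine Prod.ext ?_ ?_
  · rw [← hleft m.1 m.2, hmn, hleft]
  · rw [← hright m.1 m.2, hmn, hright]

/-- The multisets with entries outside `S` and product of weights `N` at most `x`. For `X` the
primes of a number field and `N` the norm these are the ideals prime to `S` of norm at most `x`. -/
def boundedMultisets (N : X → ℕ) (S : Finset X) (x : ℝ) : Set (Multiset X) :=
  {m | (∀ p ∈ m, p ∉ S) ∧ ((m.map N).prod : ℝ) ≤ x}

lemma boundedMultisets_subset (N : X → ℕ) (S : Finset X) (x : ℝ) :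
    boundedMultisets N S x ⊆ boundedMultisets N ∅ x := fun _ hm => ⟨by simp, hm.2⟩

lemma multiset_prod_map_pos {N : X → ℕ} (hN : ∀ p, 2 ≤ N p) (m : Multiset X) :
    0 < (m.map N).prod :=
  Multiset.prod_pos fun n hn => by
    obtain ⟨p, -, rfl⟩ := Multiset.mem_map.1 hn
    exact two_pos.trans_le (hN p)

lemma boundedMultisets_eq_union [DecidableEq X] {N : X → ℕ} {S : Finset X} {v : X}
    (hN : 0 < N v) (hv : v ∉ S) (x : ℝ) :
    boundedMultisets N S x =
      boundedMultisets N (insert v S) x ∪ Multiset.cons v '' boundedMultisets N S (x / N v) := by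
  have hN' : (0 : ℝ) < N v := by exact_mod_cast hN
  have hcons (m : Multiset X) :
      v ::ₘ m ∈ boundedMultisets N S x ↔ m ∈ boundedMultisets N S (x / N v) := by
    simp [boundedMultisets, hv, le_div_iff₀' hN']
  ext m
  constructor
  · intro hm
    by_cases hvm : v ∈ m
    · obtain ⟨n, rfl⟩ := Multiset.exists_cons_of_mem hvm
      exact .inr ⟨n, (hcons n).1 hm, rfl⟩
    · refine .inl ⟨fun p hp => ?_, hm.2⟩
      rw [Finset.mem_insert, not_or]
      exact ⟨fun h => hvm (h ▸ hp), hm.1 p hp⟩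
  · rintro (hm | ⟨n, hn, rfl⟩)
    · exact ⟨fun p hp h => hm.1 p hp (Finset.mem_insert_of_mem h), hm.2⟩
    · exact (hcons n).2 hn

lemma ncard_boundedMultisets_eq_add [DecidableEq X] {N : X → ℕ} {S : Finset X} {v : X}
    (hN : 0 < N v) (hfin : ∀ x, (boundedMultisets N ∅ x).Finite) (hv : v ∉ S) (x : ℝ) :
    (boundedMultisets N S x).ncard =
      (boundedMultisets N (insert v S) x).ncard + (boundedMultisets N S (x / N v)).ncard := by
  have hfin' (T x) : (boundedMultisets N T x).Finite :=
    (hfin x).subset (boundedMultisets_subset N T x)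
  rw [boundedMultisets_eq_union hN hv, Set.ncard_union_eq ?_ (hfin' _ _) ((hfin' _ _).image _),
    Set.ncard_image_of_injective _ fun _ _ => (Multiset.cons_inj_right v).1]
  rw [Set.disjoint_left]
  rintro _ hm ⟨n, -, rfl⟩
  exact hm.1 v (Multiset.mem_cons_self v n) (Finset.mem_insert_self v S)

lemma exists_tendsto_ncard_boundedMultisets_div {N : X → ℕ} (hN : ∀ p, 2 ≤ N p)
    (hfin : ∀ x, (boundedMultisets N ∅ x).Finite)
    (h : ∃ κ > 0, Tendsto (fun x => (boundedMultisets N ∅ x).ncard / x) atTop (𝓝 κ))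
    (S : Finset X) :
    ∃ κ > 0, Tendsto (fun x => (boundedMultisets N S x).ncard / x) atTop (𝓝 κ) := by
  classical
  induction S using Finset.induction_on with
  | empty => exact h
  | insert v S hv ih =>
    obtain ⟨κ, hκ, hκS⟩ := ih
    have hNv : (1 : ℝ) < N v := by exact_mod_cast hN v
    refine ⟨κ - κ / N v, sub_pos.2 (div_lt_self hκ hNv), ?_⟩
    have hdiv := (hκS.comp (tendsto_id.atTop_div_const (zero_lt_one.trans hNv))).div_const (N v : ℝ)
    refine (hκS.sub hdiv).congr fun x => ?_
    rw [ncard_boundedMultisets_eq_add (two_pos.trans_le (hN v)) hfin hv x]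
    simp only [Function.comp_apply, id_eq, Nat.cast_add]
    field_simp
    ring

lemma multiset_prod_map_map_le {N : X → ℕ} {N' : Y → ℕ} {S : Finset X} {f : X → Y}
    (hf : ∀ p ∉ S, N' (f p) ≤ N p) {m : Multiset X} (hm : ∀ p ∈ m, p ∉ S) :
    ((m.map f).map N').prod ≤ (m.map N).prod := by
  rw [Multiset.map_map]
  exact Multiset.prod_map_le_prod_map₀ _ _ (fun _ _ => Nat.zero_le _) fun p hp => hf p (hm p hp)

/-- Both unknowns of the pair `(m, m')` are recovered from `m.map f + m'.map g`, so the multisets on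
`Y` are about as numerous as pairs of multisets on `X`. -/
lemma sum_ncard_boundedMultisets_div_le {N : X → ℕ} {N' : Y → ℕ} (hN : ∀ p, 2 ≤ N p)
    (hfin : ∀ x, (boundedMultisets N ∅ x).Finite) (hfin' : ∀ x, (boundedMultisets N' ∅ x).Finite)
    {S : Finset X} {f g : X → Y} (hf : Set.InjOn f {p | p ∉ S}) (hg : Set.InjOn g {p | p ∉ S})
    (hfg : ∀ p ∉ S, ∀ q ∉ S, f p ≠ g q) (hNf : ∀ p ∉ S, N' (f p) ≤ N p)
    (hNg : ∀ p ∉ S, N' (g p) ≤ N p) {F : Finset (Multiset X)} (hF : ∀ m ∈ F, ∀ p ∈ m, p ∉ S)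
    (x : ℝ) :
    ∑ m ∈ F, (boundedMultisets N S (x / (m.map N).prod)).ncard ≤
      (boundedMultisets N' ∅ x).ncard := by
  have hfinS (x) : (boundedMultisets N S x).Finite :=
    (hfin x).subset (boundedMultisets_subset N S x)
  simp_rw [Set.ncard_eq_toFinset_card _ (hfinS _), Set.ncard_eq_toFinset_card _ (hfin' x)]
  rw [← Finset.card_sigma]
  refine Finset.card_le_card_of_injOn (fun m => m.1.map f + m.2.map g) ?_ ?_
  · rintro ⟨m, m'⟩ hm
    simp only [Finset.coe_sigma, Set.mem_sigma_iff, SetLike.mem_coe, Set.Finite.mem_toFinset] at hm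
    obtain ⟨hmF, hm'S, hm'x⟩ := hm
    rw [le_div_iff₀' (by exact_mod_cast multiset_prod_map_pos hN m)] at hm'x
    refine (hfin' x).mem_toFinset.2 ⟨by simp, le_trans ?_ hm'x⟩
    rw [Multiset.map_add, Multiset.prod_add]
    exact_mod_cast Nat.mul_le_mul (multiset_prod_map_map_le hNf (hF m hmF))
      (multiset_prod_map_map_le hNg hm'S)
  · rintro ⟨m, m'⟩ hm ⟨n, n'⟩ hn h
    simp only [Finset.coe_sigma, Set.mem_sigma_iff, SetLike.mem_coe, Set.Finite.mem_toFinset]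
      at hm hn
    have := injOn_multiset_map_add_map hf hg hfg (x₁ := (m, m')) (x₂ := (n, n'))
      ⟨hF m hm.1, hm.2.1⟩ ⟨hF n hn.1, hn.2.1⟩ h
    simpa using this

theorem not_tendsto_ncard_boundedMultisets_div {N : X → ℕ} {N' : Y → ℕ} (hN : ∀ p, 2 ≤ N p)
    (hfin : ∀ x, (boundedMultisets N ∅ x).Finite) (hfin' : ∀ x, (boundedMultisets N' ∅ x).Finite)
    (h : ∃ κ > 0, Tendsto (fun x => (boundedMultisets N ∅ x).ncard / x) atTop (𝓝 κ))
    {S : Finset X} {f g : X → Y} (hf : Set.InjOn f {p | p ∉ S}) (hg : Set.InjOn g {p | p ∉ S})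
    (hfg : ∀ p ∉ S, ∀ q ∉ S, f p ≠ g q) (hNf : ∀ p ∉ S, N' (f p) ≤ N p)
    (hNg : ∀ p ∉ S, N' (g p) ≤ N p) (κ' : ℝ) :
    ¬ Tendsto (fun x => (boundedMultisets N' ∅ x).ncard / x) atTop (𝓝 κ') := by
  intro h'
  obtain ⟨κ, hκ, hκS⟩ := exists_tendsto_ncard_boundedMultisets_div hN hfin h S
  obtain ⟨δ, hδ, hδκ⟩ := exists_between hκ
  have hpos (m : Multiset X) : (0 : ℝ) < (m.map N).prod := by
    exact_mod_cast multiset_prod_map_pos hN m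
  have hlower : ∀ᶠ x in atTop, δ * x ≤ (boundedMultisets N S x).ncard := by
    filter_upwards [hκS.eventually_const_le hδκ, eventually_gt_atTop 0] with x hx hx₀
    rwa [le_div_iff₀ hx₀] at hx
  have hupper : ∀ᶠ x in atTop, ((boundedMultisets N' ∅ x).ncard : ℝ) ≤ (κ' + 1) * x := by
    filter_upwards [h'.eventually_le_const (lt_add_one κ'), eventually_gt_atTop 0] with x hx hx₀
    rwa [div_le_iff₀ hx₀] at hx
  have hbound (F : Finset (Multiset X)) (hF : ∀ m ∈ F, ∀ p ∈ m, p ∉ S) :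
      δ * ∑ m ∈ F, ((m.map N).prod : ℝ)⁻¹ ≤ κ' + 1 := by
    have hlowerF : ∀ᶠ x in atTop, ∀ m ∈ F, δ * (x / (m.map N).prod) ≤
        (boundedMultisets N S (x / (m.map N).prod)).ncard :=
      (eventually_all_finset F).2 fun m _ =>
        (tendsto_id.atTop_div_const (hpos m)).eventually hlower
    obtain ⟨x, hxF, hx, hx₀⟩ := (hlowerF.and (hupper.and (eventually_gt_atTop 0))).exists
    refine le_of_mul_le_mul_right ?_ hx₀
    calc (δ * ∑ m ∈ F, ((m.map N).prod : ℝ)⁻¹) * x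
        = ∑ m ∈ F, δ * (x / (m.map N).prod) := by
          rw [Finset.mul_sum, Finset.sum_mul]
          exact Finset.sum_congr rfl fun m _ => by ring
      _ ≤ ∑ m ∈ F, ((boundedMultisets N S (x / (m.map N).prod)).ncard : ℝ) :=
          Finset.sum_le_sum hxF
      _ ≤ (boundedMultisets N' ∅ x).ncard := by
          exact_mod_cast
            sum_ncard_boundedMultisets_div_le hN hfin hfin' hf hg hfg hNf hNg hF x
      _ ≤ (κ' + 1) * x := hx
  obtain ⟨n, hn⟩ := exists_nat_gt ((κ' + 1) / (δ * (δ / 2)))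
  obtain ⟨F, hF, hnF⟩ := exists_mul_half_le_sum_inv hpos
    (fun x => (hfin x).subset (boundedMultisets_subset N S x)) hδ hlower n
  rw [div_lt_iff₀ (by positivity)] at hn
  nlinarith [hbound F hF, mul_le_mul_of_nonneg_left hnF hδ.le]

end Counting

/-! ### Infinitely many inert primes -/

section PrimeCounting

open IsDedekindDomain NumberField Filter Topology

section IdealOfMultiset

variable (R : Type*) [CommRing R] [IsDedekindDomain R]

lemma injective_multiset_map_asIdeal_prod :
    Function.Injective fun m : Multiset (HeightOneSpectrum R) =>
      (m.map HeightOneSpectrum.asIdeal).prod := by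
  have hfactors (m : Multiset (HeightOneSpectrum R)) :
      UniqueFactorizationMonoid.normalizedFactors (m.map HeightOneSpectrum.asIdeal).prod =
        m.map HeightOneSpectrum.asIdeal := by
    refine UniqueFactorizationMonoid.normalizedFactors_prod_of_prime fun p hp => ?_
    obtain ⟨v, -, rfl⟩ := Multiset.mem_map.1 hp
    exact v.prime
  intro m n h
  refine Multiset.map_injective HeightOneSpectrum.asIdeal_injective ?_
  rw [← hfactors m, ← hfactors n]
  exact congrArg _ h

variable {R} in
lemma exists_multiset_map_asIdeal_prod_eq {I : Ideal R} (hI : I ≠ ⊥) :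
    ∃ m : Multiset (HeightOneSpectrum R), (m.map HeightOneSpectrum.asIdeal).prod = I := by
  have hprime (J) (hJ : J ∈ UniqueFactorizationMonoid.normalizedFactors I) :=
    UniqueFactorizationMonoid.prime_of_normalized_factor J hJ
  refine ⟨(UniqueFactorizationMonoid.normalizedFactors I).pmap
    (fun J hJ => ⟨J, Ideal.isPrime_of_prime hJ, hJ.ne_zero⟩) hprime, ?_⟩
  rw [Multiset.map_pmap, Multiset.pmap_eq_map, Multiset.map_id',
    Ideal.prod_normalizedFactors_eq_self hI]

end IdealOfMultiset

section PrimeNorm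

variable (K : Type*) [Field K] [NumberField K]

/-- The absolute norm of a prime of `K`. -/
noncomputable def primeNorm (v : HeightOneSpectrum (𝓞 K)) : ℕ := v.asIdeal.absNorm

variable {K} in
lemma two_le_primeNorm (v : HeightOneSpectrum (𝓞 K)) : 2 ≤ primeNorm K v :=
  NumberField.HeightOneSpectrum.one_lt_absNorm v

variable {K} in
lemma absNorm_multiset_map_asIdeal_prod (m : Multiset (HeightOneSpectrum (𝓞 K))) :
    (m.map HeightOneSpectrum.asIdeal).prod.absNorm = (m.map (primeNorm K)).prod := by
  rw [map_multiset_prod, Multiset.map_map]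
  rfl

lemma finite_boundedMultisets_primeNorm (x : ℝ) :
    (boundedMultisets (primeNorm K) ∅ x).Finite := by
  refine .of_finite_image ((Ideal.finite_setOfPred_absNorm_le (S := 𝓞 K) ⌊x⌋₊).subset ?_)
    (injective_multiset_map_asIdeal_prod (𝓞 K)).injOn
  rintro _ ⟨m, hm, rfl⟩
  exact (absNorm_multiset_map_asIdeal_prod m).trans_le (Nat.le_floor hm.2)

lemma ncard_boundedMultisets_primeNorm (x : ℝ) :
    (boundedMultisets (primeNorm K) ∅ x).ncard =
      Nat.card {I : nonZeroDivisors (Ideal (𝓞 K)) // ((I : Ideal (𝓞 K)).absNorm : ℝ) ≤ x} := by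
  rw [← Nat.card_coe_set_eq]
  have hne (m : Multiset (HeightOneSpectrum (𝓞 K))) :
      (m.map HeightOneSpectrum.asIdeal).prod ∈ nonZeroDivisors (Ideal (𝓞 K)) := by
    refine mem_nonZeroDivisors_of_ne_zero (mt Ideal.absNorm_eq_zero_iff.2 ?_)
    rw [absNorm_multiset_map_asIdeal_prod]
    exact (multiset_prod_map_pos two_le_primeNorm m).ne'
  refine Nat.card_congr (.ofBijective
    (fun m => ⟨⟨_, hne m⟩, by simpa [absNorm_multiset_map_asIdeal_prod] using m.2.2⟩) ⟨?_, ?_⟩)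
  · intro m n h
    exact Subtype.ext (injective_multiset_map_asIdeal_prod (𝓞 K) (by simpa using h))
  · rintro ⟨⟨I, hI⟩, hx⟩
    obtain ⟨m, rfl⟩ := exists_multiset_map_asIdeal_prod_eq (nonZeroDivisors.ne_zero hI)
    exact ⟨⟨m, by simp, by simpa [absNorm_multiset_map_asIdeal_prod] using hx⟩, rfl⟩

lemma exists_tendsto_ncard_boundedMultisets_primeNorm_div :
    ∃ κ > 0, Tendsto (fun x => (boundedMultisets (primeNorm K) ∅ x).ncard / x) atTop (𝓝 κ) := by
  refine ⟨_, dedekindZeta_residue_pos K, ?_⟩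
  simp_rw [ncard_boundedMultisets_primeNorm]
  exact NumberField.Ideal.tendsto_norm_le_div_atTop₀ K

end PrimeNorm

variable {K L : Type*} [Field K] [Field L] [Algebra K L]

lemma liesOver_primeBelow (w : HeightOneSpectrum (𝓞 L)) :
    w.asIdeal.LiesOver (primeBelow (algebraMap K L) w).asIdeal := ⟨rfl⟩

variable [NumberField K] [NumberField L]

lemma primeNorm_primeBelow_le (w : HeightOneSpectrum (𝓞 L)) :
    primeNorm K (primeBelow (algebraMap K L) w) ≤ primeNorm L w := by
  set v := primeBelow (algebraMap K L) w
  have := liesOver_primeBelow (K := K) w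
  have := v.isMaximal
  have := w.isMaximal
  rw [primeNorm, primeNorm,
    Ideal.absNorm_eq_pow_inertiaDeg'_of_liesOver w.asIdeal v.asIdeal v.isPrime v.ne_bot]
  exact Nat.le_self_pow (Ideal.inertiaDeg'_ne_zero _ _) _

lemma primeNorm_le_of_primeBelow_eq (h₂ : Module.finrank K L = 2)
    {w w' : HeightOneSpectrum (𝓞 L)} (hne : w ≠ w')
    (h : primeBelow (algebraMap K L) w = primeBelow (algebraMap K L) w') :
    primeNorm L w ≤ primeNorm K (primeBelow (algebraMap K L) w) := by
  have hw := liesOver_primeBelow (K := K) w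
  have hw' := liesOver_primeBelow (K := K) w'
  have hle' := primeNorm_primeBelow_le (K := K) w'
  rw [← h] at hw' hle'
  set v := primeBelow (algebraMap K L) w
  have hdvd : w.asIdeal * w'.asIdeal ∣ v.asIdeal.map (algebraMap (𝓞 K) (𝓞 L)) := by
    rw [Ideal.dvd_iff_le, Ideal.mul_eq_inf_of_coprime, le_inf_iff, Ideal.map_le_iff_le_comap,
      Ideal.map_le_iff_le_comap]
    · exact ⟨hw.over.le, hw'.over.le⟩
    · exact Ideal.IsMaximal.coprime_of_ne w.isMaximal w'.isMaximal
        (HeightOneSpectrum.asIdeal_injective.ne hne)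
  have hdvd' := map_dvd Ideal.absNorm hdvd
  rw [map_mul, Ideal.absNorm_algebraMap, ← IsFractionRing.finrank_eq (𝓞 K) K (𝓞 L) L, h₂]
    at hdvd'
  have hv := two_pos.trans_le (two_le_primeNorm v)
  refine Nat.le_of_mul_le_mul_right ?_ hv
  calc primeNorm L w * primeNorm K v ≤ primeNorm L w * primeNorm L w' := by gcongr
    _ ≤ primeNorm K v ^ 2 := Nat.le_of_dvd (by positivity) hdvd'
    _ = primeNorm K v * primeNorm K v := sq _

/-- If `u` were a local square outside `S`, then almost all primes of `K` would split in `K(√u)`, so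
`K(√u)` would have far more ideals of bounded norm than a number field can have. -/
theorem exists_notMem_localSquares {K : Type*} [Field K] [NumberField K] {u : Kˣ}
    (hu : ¬ IsSquare (u : K)) (S : Finset (HeightOneSpectrum (𝓞 K))) :
    ∃ v ∉ S, u ∉ localSquares (v.valuation K) := by
  by_contra! hS
  obtain ⟨L, _, _, _, ⟨q⟩⟩ := exists_numberField_sqrtExtension hu
  obtain ⟨κ, -, hκ⟩ := exists_tendsto_ncard_boundedMultisets_primeNorm_div L
  choose f hf using primeBelow_surjective (algebraMap K L)
  let g (v : HeightOneSpectrum (𝓞 K)) := primeBelow (q.conj : L →+* L) (f v)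
  have hg (v) : primeBelow (algebraMap K L) (g v) = v := (q.primeBelow_conj _).trans (hf v)
  have hne (v) (hv : v ∉ S) : g v ≠ f v := q.primeBelow_conj_ne (by rw [hf]; exact hS v hv)
  refine not_tendsto_ncard_boundedMultisets_div two_le_primeNorm
    (finite_boundedMultisets_primeNorm K) (finite_boundedMultisets_primeNorm L)
    (exists_tendsto_ncard_boundedMultisets_primeNorm_div K) (S := S) (f := f) (g := g)
    (Function.LeftInverse.injective hf).injOn (Function.LeftInverse.injective hg).injOn
    (fun v hv v' _ h => ?_) (fun v hv => ?_) (fun v hv => ?_) κ hκ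
  · obtain rfl : v = v' := by rw [← hf v, h, hg]
    exact hne v hv h.symm
  · have := primeNorm_le_of_primeBelow_eq q.finrank_eq_two (hne v hv).symm (by rw [hf, hg])
    rwa [hf] at this
  · have := primeNorm_le_of_primeBelow_eq q.finrank_eq_two (hne v hv) (by rw [hf, hg])
    rwa [hg] at this

end PrimeCounting

/-! ### The global norm theorem -/

section GlobalNorm

open IsDedekindDomain NumberField

lemma SqrtExtension.not_isSquare_algebraMap {K L : Type*} [Field K] [NeZero (2 : K)] [Field L]
    [Algebra K L] {b u : K} (q : SqrtExtension K L b) (hb : ¬ IsSquare b) (hu : ¬ IsSquare u)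
    (hub : ¬ IsSquare (u * b)) : ¬ IsSquare (algebraMap K L u) := by
  rintro ⟨z, hz⟩
  obtain ⟨α, β, rfl⟩ := q.exists_eq_add_mul_root z
  have h : algebraMap K L (2 * α * β) * q.root = algebraMap K L (u - α ^ 2 - β ^ 2 * b) := by
    simp only [map_mul, map_sub, map_pow, map_ofNat, ← q.root_sq, hz]
    ring
  by_cases h₀ : 2 * α * β = 0
  · rw [h₀, map_zero, zero_mul, eq_comm, map_eq_zero] at h
    rcases mul_eq_zero.1 h₀ with hα | rfl
    · obtain rfl := (mul_eq_zero.1 hα).resolve_left two_ne_zero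
      exact hub ⟨β * b, by linear_combination b * h⟩
    · exact hu ⟨α, by linear_combination h⟩
  · have h₀L : algebraMap K L (2 * α * β) ≠ 0 := by rwa [Ne, map_eq_zero]
    refine hb ⟨(u - α ^ 2 - β ^ 2 * b) / (2 * α * β), (algebraMap K L).injective ?_⟩
    rw [← q.root_sq, ← sq, map_pow, map_div₀, ← h, mul_div_cancel_left₀ _ h₀L]

lemma map_mem_localSquares {K L : Type*} [Field K] [NumberField K] [Field L] [NumberField L]
    {f : K →+* L} {w : HeightOneSpectrum (𝓞 L)} {x : Kˣ}
    (hx : x ∈ localSquares ((primeBelow f w).valuation K)) :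
    Units.map (f : K →* L) x ∈ localSquares (w.valuation L) := by
  obtain ⟨y, hy⟩ := hx
  refine ⟨f y, ?_⟩
  rw [← valuation_map_lt_iff (f := f)] at hy
  rw [map_sub, map_pow, map_mul, map_ofNat] at hy
  exact hy

variable {K : Type*} [Field K] [NumberField K]

lemma exists_mem_localSquares_and_notMem_localSquares (S : Finset (HeightOneSpectrum (𝓞 K)))
    {b u : Kˣ} (hb : ¬ IsSquare (b : K)) (hu : ¬ IsSquare (u : K))
    (hub : ¬ IsSquare (u * b : K)) :
    ∃ v ∉ S, v.valuation K 2 = 1 ∧ v.valuation K (u : K) = 1 ∧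
      b ∈ localSquares (v.valuation K) ∧ u ∉ localSquares (v.valuation K) := by
  classical
  obtain ⟨L, _, _, _, ⟨q⟩⟩ := exists_numberField_sqrtExtension hb
  let P (x : Kˣ) := (finite_setOf_valuation_ne_one (R := 𝓞 K) x.ne_zero).toFinset
  have hP {x : Kˣ} {v} (hv : v ∉ P x) : v.valuation K (x : K) = 1 := by simpa [P] using hv
  let two : Kˣ := Units.mk0 2 two_ne_zero
  let uL : Lˣ := Units.map (algebraMap K L : K →* L) u
  obtain ⟨w, hw, hwu⟩ := exists_notMem_localSquares (u := uL)
    (q.not_isSquare_algebraMap hb hu hub) (primesAbove (algebraMap K L) (S ∪ P two ∪ P u ∪ P b))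
  simp only [mem_primesAbove, Finset.mem_union, not_or] at hw
  obtain ⟨⟨⟨hwS, hw₂⟩, hwu₁⟩, hwb₁⟩ := hw
  have huv := mt map_mem_localSquares hwu
  refine ⟨_, hwS, hP hw₂, hP hwu₁, by_contra fun hbv => hwu ?_, huv⟩
  have hubv := (mul_mem_localSquares_iff (hP hw₂) (hP hwu₁) (hP hwb₁)).2 (iff_of_false huv hbv)
  have hubw := map_mem_localSquares hubv
  rw [map_mul] at hubw
  exact (Subgroup.mul_mem_cancel_right _ (mem_localSquares_of_sq_eq q.root_sq)).1 hubw

lemma exists_mem_sUnits_forall_mem_localSquares {S T : Finset (HeightOneSpectrum (𝓞 K))}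
    (h₂ : ∀ v ∉ S, v.valuation K 2 = 1) (hST : Disjoint S T)
    (hcard : T.card + 1 < S.card + Fintype.card (InfinitePlace K)) {b : Kˣ} (hb : b ∈ sUnits K S) :
    ∃ u ∈ sUnits K S, (∀ q ∈ T, u ∈ localSquares (q.valuation K)) ∧
      ¬ IsSquare (u : K) ∧ ¬ IsSquare (u * b : K) := by
  by_contra! hcon
  let V := (⨅ q ∈ T, localSquares (q.valuation K)).subgroupOf (sUnits K S)
  have hmemV {x : sUnits K S} : x ∈ V ↔ ∀ q ∈ T, (x : Kˣ) ∈ localSquares (q.valuation K) := by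
    simp only [V, Subgroup.mem_subgroupOf, Subgroup.mem_iInf]
  have hV : V.index ∣ 2 ^ T.card := by
    refine relIndex_iInf_dvd_two_pow T _ _ fun q hq =>
      relIndex_dvd_two_iff_mul_mem.2 fun x hx y hy hxq hyq => ?_
    have hqS := Finset.disjoint_right.1 hST hq
    exact (mul_mem_localSquares_iff (h₂ q hqS) (hx q hqS) (hy q hqS)).2 (iff_of_false hxq hyq)
  have hmul {x : sUnits K S} (hx : x ∈ V) (hxsq : ¬ IsSquare x) : IsSquare (x * ⟨b, hb⟩) :=
    isSquare_sUnits_iff.2 (hcon x x.2 (hmemV.1 hx) (mt isSquare_sUnits_iff.2 hxsq))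
  have hsquare : (Subgroup.square (sUnits K S)).relIndex V ∣ 2 := by
    refine relIndex_dvd_two_iff_mul_mem.2 fun x hx y hy hxsq hysq => Subgroup.mem_square.2 ?_
    have h := ((hmul hx hxsq).mul (hmul hy hysq)).div (IsSquare.mul_self ⟨b, hb⟩)
    rwa [mul_mul_mul_comm, mul_div_cancel_right] at h
  have hle : Subgroup.square (sUnits K S) ≤ V := by
    intro x hx
    obtain ⟨y, rfl⟩ := Subgroup.mem_square.1 hx
    exact hmemV.2 fun q _ => mem_localSquares_of_sq_eq (sq _)
  have hdvd : 2 ^ (S.card + Fintype.card (InfinitePlace K)) ∣ 2 ^ (T.card + 1) := by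
    rw [← index_square_sUnits, ← Subgroup.relIndex_mul_index hle, pow_succ']
    exact mul_dvd_mul hsquare hV
  exact hcard.not_ge ((Nat.pow_dvd_pow_iff_le_right one_lt_two).1 hdvd)

lemma exists_forall_mem_localSquares_iff {S : Finset (HeightOneSpectrum (𝓞 K))}
    (h₂ : ∀ v ∉ S, v.valuation K 2 = 1) {b : Kˣ} (hb : b ∈ sUnits K S)
    (hbsq : ¬ IsSquare (b : K)) {k : ℕ} (hk : k < S.card + Fintype.card (InfinitePlace K)) :
    ∃ T : Finset (HeightOneSpectrum (𝓞 K)), Disjoint S T ∧ T.card = k ∧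
      (∀ q ∈ T, b ∈ localSquares (q.valuation K)) ∧
      ∀ η : HeightOneSpectrum (𝓞 K) → Prop,
        ∃ y ∈ sUnits K S, ∀ q ∈ T, (y ∈ localSquares (q.valuation K) ↔ η q) := by
  classical
  induction k with
  | zero => exact ⟨∅, by simp, rfl, by simp, fun _ => ⟨1, one_mem _, by simp⟩⟩
  | succ k ih =>
    obtain ⟨T, hST, rfl, hTb, hη⟩ := ih (by lia)
    obtain ⟨u, hu, huT, husq, hubsq⟩ :=
      exists_mem_sUnits_forall_mem_localSquares h₂ hST hk hb
    obtain ⟨v, hv, hv₂, hvu, hbv, huv⟩ :=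
      exists_mem_localSquares_and_notMem_localSquares (S ∪ T) hbsq husq hubsq
    obtain ⟨hvS, hvT⟩ := not_or.1 (mt Finset.mem_union.2 hv)
    refine ⟨insert v T, Finset.disjoint_insert_right.2 ⟨hvS, hST⟩,
      Finset.card_insert_of_notMem hvT, Finset.forall_mem_insert _ _ _ |>.2 ⟨hbv, hTb⟩,
      fun η => ?_⟩
    obtain ⟨y, hy, hyη⟩ := hη η
    by_cases h : y ∈ localSquares (v.valuation K) ↔ η v
    · exact ⟨y, hy, Finset.forall_mem_insert _ _ _ |>.2 ⟨h, hyη⟩⟩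
    · refine ⟨y * u, mul_mem hy hu, Finset.forall_mem_insert _ _ _ |>.2 ⟨?_, fun q hq => ?_⟩⟩
      · rw [mul_mem_localSquares_iff hv₂ (hy v hvS) hvu]
        tauto
      · rw [Subgroup.mul_mem_cancel_right _ (huT q hq), hyη q hq]

lemma PrincipalAway.exists_mem_sUnits_union {R K : Type*} [CommRing R] [IsDedekindDomain R]
    [Field K] [Algebra R K] [IsFractionRing R K] [DecidableEq (HeightOneSpectrum R)]
    {S T : Finset (HeightOneSpectrum R)} (hS : PrincipalAway K S) (hST : Disjoint S T)
    (θ : HeightOneSpectrum R → Prop) :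
    ∃ x ∈ sUnits K (S ∪ T), ∀ q ∈ T, (θ q → q.valuation K (x : K) = 1) ∧
      (¬ θ q → x ∉ evenValuation (q.valuation K)) := by
  classical
  choose! c hc hc' using fun q => hS.exists_notMem_evenValuation (q := q)
  have hTS {q} (hq : q ∈ T) : q ∉ S := Finset.disjoint_right.1 hST hq
  have hprod {A : Finset (HeightOneSpectrum R)} (hA : A ⊆ T) {v} (hv : v ∉ S) (hvA : v ∉ A) :
      v.valuation K ((∏ q ∈ A, c q : Kˣ) : K) = 1 := by
    rw [Units.coe_prod, map_prod]
    exact Finset.prod_eq_one fun q hq =>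
      hc' q (hTS (hA hq)) v hv (ne_of_mem_of_not_mem hq hvA).symm
  have hfilter : {q ∈ T | ¬ θ q} ⊆ T := Finset.filter_subset _ _
  refine ⟨∏ q ∈ T with ¬ θ q, c q, mem_sUnits.2 fun v hv => ?_,
    fun q hq => ⟨fun h => ?_, fun h => ?_⟩⟩
  · rw [Finset.mem_union, not_or] at hv
    exact hprod hfilter hv.1 fun h => hv.2 (hfilter h)
  · exact hprod hfilter (hTS hq) (by simp [h])
  · rw [← Finset.mul_prod_erase _ _ (Finset.mem_filter.2 ⟨hq, h⟩), Subgroup.mul_mem_cancel_right]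
    · exact hc q (hTS hq)
    · exact mem_evenValuation_of_eq_one
        (hprod ((Finset.erase_subset _ _).trans hfilter) (hTS hq) (Finset.notMem_erase _ _))

lemma two_pow_card_le_normGroup_relIndex [DecidableEq (HeightOneSpectrum (𝓞 K))]
    {S T : Finset (HeightOneSpectrum (𝓞 K))} (h₂ : ∀ v ∉ S, v.valuation K 2 = 1)
    (hS : PrincipalAway K S) (hST : Disjoint S T)
    (hη : ∀ η : HeightOneSpectrum (𝓞 K) → Prop,
      ∃ y ∈ sUnits K S, ∀ q ∈ T, (y ∈ localSquares (q.valuation K) ↔ η q))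
    {u : Kˣ} (hu : ∀ q ∈ T, u ∉ localSquares (q.valuation K))
    (h₀ : (normGroup (u : K)).relIndex (sUnits K (S ∪ T)) ≠ 0) :
    2 ^ T.card ≤ (normGroup (u : K)).relIndex (sUnits K (S ∪ T)) := by
  classical
  have hTS {q} (hq : q ∈ T) : q ∉ S := Finset.disjoint_right.1 hST hq
  let F (q : HeightOneSpectrum (𝓞 K)) : Subgroup Kˣ :=
    if u ∈ evenValuation (q.valuation K) then evenValuation (q.valuation K)
    else localSquares (q.valuation K) ⊔ Subgroup.zpowers (-u)
  refine two_pow_card_le_relIndex T F (fun q hq => ?_) (fun η => ?_) h₀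
  · by_cases h : u ∈ evenValuation (q.valuation K)
    · simp only [F, h, if_true]
      exact normGroup_le_evenValuation_of_valuation_two_eq_one (h₂ q (hTS hq)) h (hu q hq)
    · simp only [F, h, if_false]
      exact normGroup_le_localSquares_sup_zpowers (h₂ q (hTS hq)) h
  · obtain ⟨x, hx, hxT⟩ := hS.exists_mem_sUnits_union hST
      fun q => u ∈ evenValuation (q.valuation K) → η q
    obtain ⟨y, hy, hyT⟩ := hη fun q => (x ∈ localSquares (q.valuation K) ↔ η q)
    refine ⟨y * x, mul_mem (sUnits_mono Finset.subset_union_left hy) hx, fun q hq => ?_⟩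
    have hyq : q.valuation K (y : K) = 1 := hy q (hTS hq)
    obtain ⟨hx₁, hx₂⟩ := hxT q hq
    by_cases h : u ∈ evenValuation (q.valuation K)
    · simp only [F, h, if_true]
      rw [Subgroup.mul_mem_cancel_left _ (mem_evenValuation_of_eq_one hyq)]
      by_cases hηq : η q
      · exact iff_of_true (mem_evenValuation_of_eq_one (hx₁ fun _ => hηq)) hηq
      · exact iff_of_false (hx₂ fun hu => hηq (hu h)) hηq
    · simp only [F, h, if_false]
      have hxq := hx₁ fun hu => absurd hu h
      rw [mem_localSquares_sup_zpowers_neg_iff h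
        (mul_mem (mem_evenValuation_of_eq_one hyq) (mem_evenValuation_of_eq_one hxq)),
        mul_mem_localSquares_iff (h₂ q (hTS hq)) hyq hxq, hyT q hq]
      tauto

lemma isSquare_of_forall_mem_localSquares [IsTotallyComplex K]
    [DecidableEq (HeightOneSpectrum (𝓞 K))] {S T : Finset (HeightOneSpectrum (𝓞 K))}
    (h₂ : ∀ v ∉ S, v.valuation K 2 = 1) (hS : PrincipalAway K S) (hST : Disjoint S T)
    (hη : ∀ η : HeightOneSpectrum (𝓞 K) → Prop,
      ∃ y ∈ sUnits K S, ∀ q ∈ T, (y ∈ localSquares (q.valuation K) ↔ η q))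
    {u : Kˣ} (hu : u ∈ sUnits K (S ∪ T)) (huS : ∀ v ∈ S, u ∈ localSquares (v.valuation K)) :
    IsSquare (u : K) := by
  classical
  by_contra husq
  let A := {q ∈ T | u ∈ localSquares (q.valuation K)}
  let B := {q ∈ T | u ∉ localSquares (q.valuation K)}
  have hA : A ⊆ T := Finset.filter_subset _ _
  have hB : B ⊆ T := Finset.filter_subset _ _
  have hcard : A.card + B.card = T.card := Finset.card_filter_add_card_filter_not _
  obtain ⟨h₀, hupper⟩ := normGroup_relIndex_sUnits_mul_le (T := S ∪ A)
    (fun v hv => h₂ v (mt (Finset.mem_union_left _) hv)) (hS.mono Finset.subset_union_left) hu husq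
    (Finset.union_subset_union_right hA)
    (fun v hv => (Finset.mem_union.1 hv).elim (huS v) fun h => (Finset.mem_filter.1 h).2)
  have hle : sUnits K (S ∪ B) ≤ sUnits K (S ∪ T) := sUnits_mono (Finset.union_subset_union_right hB)
  have hlower : 2 ^ B.card ≤ (normGroup (u : K)).relIndex (sUnits K (S ∪ T)) :=
    (two_pow_card_le_normGroup_relIndex h₂ hS (hST.mono_right hB)
      (fun η => (hη η).imp fun y hy => ⟨hy.1, fun q hq => hy.2 q (hB hq)⟩)
      (fun q hq => (Finset.mem_filter.1 hq).2)
      (mt (Subgroup.relIndex_eq_zero_of_le_right hle) h₀)).trans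
      (Subgroup.relIndex_le_of_le_right hle h₀)
  rw [Finset.card_union_of_disjoint hST, Finset.card_union_of_disjoint (hST.mono_right hA),
    ← hcard] at hupper
  have hpow := (Nat.mul_le_mul_right _ hlower).trans hupper
  rw [← pow_add, Nat.pow_le_pow_iff_right one_lt_two] at hpow
  lia

lemma iInf_localSquares_index_le_two_mul_relIndex [IsTotallyComplex K]
    [DecidableEq (HeightOneSpectrum (𝓞 K))] {S T : Finset (HeightOneSpectrum (𝓞 K))}
    (h₂ : ∀ v ∉ S, v.valuation K 2 = 1) (hS : PrincipalAway K S) (hST : Disjoint S T)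
    (hT : S.card + Fintype.card (InfinitePlace K) ≤ T.card + 1)
    (hη : ∀ η : HeightOneSpectrum (𝓞 K) → Prop,
      ∃ y ∈ sUnits K S, ∀ q ∈ T, (y ∈ localSquares (q.valuation K) ↔ η q)) :
    (⨅ v ∈ S, localSquares (v.valuation K)).index ≤
      2 * (⨅ v ∈ S, localSquares (v.valuation K)).relIndex (sUnits K (S ∪ T)) := by
  set P := ⨅ v ∈ S, localSquares (v.valuation K) with hP
  obtain ⟨hP₀, hPindex⟩ := iInf_localSquares_index_le S
  have hle : P.subgroupOf (sUnits K (S ∪ T)) ≤ Subgroup.square (sUnits K (S ∪ T)) := fun u hu =>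
    Subgroup.mem_square.2 <| isSquare_sUnits_iff.2 <|
      isSquare_of_forall_mem_localSquares h₂ hS hST hη u.2 <| by
        simpa only [hP, Subgroup.mem_subgroupOf, Subgroup.mem_iInf] using hu
  have hrel₀ : P.relIndex (sUnits K (S ∪ T)) ≠ 0 :=
    mt Subgroup.index_eq_zero_of_relIndex_eq_zero hP₀
  set ρ := Fintype.card (InfinitePlace K)
  calc P.index ≤ 4 ^ S.card * 2 ^ Module.finrank ℚ K := hPindex
    _ = 2 ^ (2 * S.card + 2 * ρ) := by
      rw [finrank_rat_eq_two_mul_card_infinitePlace, pow_add, pow_mul 2 2 S.card]; rfl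
    _ ≤ 2 ^ (S.card + T.card + ρ + 1) := Nat.pow_le_pow_right two_pos (by lia)
    _ = 2 * (Subgroup.square (sUnits K (S ∪ T))).index := by
      rw [index_square_sUnits, Finset.card_union_of_disjoint hST, pow_succ']
    _ ≤ 2 * P.relIndex (sUnits K (S ∪ T)) := Nat.mul_le_mul_left 2
      (Nat.le_of_dvd (Nat.pos_of_ne_zero hrel₀) (Subgroup.index_dvd_of_le hle))

lemma two_pow_card_le_iInf_evenValuation_index {S : Finset (HeightOneSpectrum (𝓞 K))}
    (h₀ : (⨅ v ∈ S, evenValuation (v.valuation K)).index ≠ 0) :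
    2 ^ S.card ≤ (⨅ v ∈ S, evenValuation (v.valuation K)).index := by
  rw [← Subgroup.relIndex_top_right] at h₀ ⊢
  refine two_pow_card_le_relIndex S (fun v => evenValuation (v.valuation K))
    (fun v hv => iInf₂_le v hv) (fun η => ?_) h₀
  obtain ⟨x, hx⟩ := exists_forall_mem_evenValuation_iff (K := K) S η
  exact ⟨x, Subgroup.mem_top x, hx⟩

/-- A case of the Hasse norm theorem for `K(√b)`. -/
theorem mem_normGroup_of_forall_mem_evenValuation [IsTotallyComplex K]
    {S : Finset (HeightOneSpectrum (𝓞 K))} (h₂ : ∀ v ∉ S, v.valuation K 2 = 1)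
    (hS : PrincipalAway K S) {b x : Kˣ} (hb : b ∈ sUnits K S) (hbsq : ¬ IsSquare (b : K))
    (hbS : ∀ v ∈ S, b ∉ localSquares (v.valuation K) →
      normGroup (b : K) ≤ evenValuation (v.valuation K))
    (hx : x ∈ sUnits K S) (hxS : ∀ v ∈ S, b ∉ localSquares (v.valuation K) →
      x ∈ evenValuation (v.valuation K)) :
    x ∈ normGroup (b : K) := by
  classical
  have hρ : 0 < Fintype.card (InfinitePlace K) := Fintype.card_pos
  obtain ⟨T, hST, hT, hbT, hη⟩ := exists_forall_mem_localSquares_iff h₂ hb hbsq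
    (k := S.card + Fintype.card (InfinitePlace K) - 1) (by lia)
  let A := {v ∈ S | b ∈ localSquares (v.valuation K)}
  let B := {v ∈ S | b ∉ localSquares (v.valuation K)}
  have hA : A ⊆ S := Finset.filter_subset _ _
  have hB : B ⊆ S := Finset.filter_subset _ _
  have hcard : A.card + B.card = S.card := Finset.card_filter_add_card_filter_not _
  have hE : ⨅ v ∈ S, localSquares (v.valuation K) ≤ ⨅ v ∈ B, evenValuation (v.valuation K) :=
    le_iInf₂ fun v hv => (iInf₂_le v (hB hv)).trans localSquares_le_evenValuation
  obtain ⟨hP₀, -⟩ := iInf_localSquares_index_le S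
  have hE₀ := ne_zero_of_dvd_ne_zero hP₀ (Subgroup.index_dvd_of_le hE)
  obtain ⟨hN₀, hN⟩ := normGroup_relIndex_sUnits_mul_le (T := A ∪ T)
    (fun v hv => h₂ v (mt (Finset.mem_union_left _) hv)) (hS.mono Finset.subset_union_left)
    (sUnits_mono Finset.subset_union_left hb) hbsq (Finset.union_subset_union_left hA)
    (fun v hv => (Finset.mem_union.1 hv).elim (fun h => (Finset.mem_filter.1 h).2) (hbT v))
  have hNB : (normGroup (b : K)).relIndex (sUnits K (S ∪ T)) * 2 ≤ 2 ^ B.card := by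
    rw [Finset.card_union_of_disjoint hST, Finset.card_union_of_disjoint (hST.mono_left hA)] at hN
    refine Nat.le_of_mul_le_mul_right (c := 2 ^ (A.card + T.card)) ?_ (by positivity)
    rwa [mul_assoc, ← pow_succ', ← pow_add, ← add_assoc, add_comm B.card, hcard]
  have hxE : x ∈ ⨅ v ∈ B, evenValuation (v.valuation K) := by
    simp only [Subgroup.mem_iInf]
    exact fun v hv => hxS v (hB hv) (Finset.mem_filter.1 hv).2
  exact inf_le_of_relIndex_mul_two_le hE hP₀
    (iInf_localSquares_index_le_two_mul_relIndex h₂ hS hST (by lia) hη)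
    (le_iInf₂ fun v hv => hbS v (hB hv) (Finset.mem_filter.1 hv).2) hN₀
    (hNB.trans (two_pow_card_le_iInf_evenValuation_index hE₀))
    ⟨hxE, sUnits_mono Finset.subset_union_left hx⟩

lemma normGroup_le_evenValuation_of_eq_neg_three {v : HeightOneSpectrum (𝓞 K)}
    (h₃ : IsSquare (v.valuation K 3)) {u : Kˣ} (hu : (u : K) = -3)
    (hv : u ∉ localSquares (v.valuation K)) :
    normGroup (u : K) ≤ evenValuation (v.valuation K) := by
  rcases (valuation_two_le_one (v.valuation K)).lt_or_eq with h₂ | h₂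
  · have h₄ : v.valuation K 4 < v.valuation K 1 := by
      rw [valuation_four, map_one]
      exact pow_lt_one₀ zero_le h₂ two_ne_zero
    have h₁ : v.valuation K (u : K) = 1 := by
      rw [show (u : K) = 1 - 4 by norm_num [hu], Valuation.map_sub_eq_of_lt_left _ h₄, map_one]
    exact normGroup_le_evenValuation_of_valuation_one_sub_le h₁
      (le_of_eq (congrArg _ (by norm_num [hu]))) hv
  · exact normGroup_le_evenValuation_of_valuation_two_eq_one h₂
      (by simpa [hu, mem_evenValuation, Valuation.map_neg] using h₃) hv

open Quaternion in
theorem exists_normSq_eq_zero_of_forall_isSquare_valuation [IsTotallyComplex K]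
    (h₂ : ∀ v : HeightOneSpectrum (𝓞 K), IsSquare (v.valuation K 2))
    (h₃ : ∀ v : HeightOneSpectrum (𝓞 K), IsSquare (v.valuation K 3)) :
    ∃ z : ℍ[K], z ≠ 0 ∧ normSq z = 0 := by
  classical
  by_cases hsq : IsSquare (-3 : K)
  · obtain ⟨x, hx⟩ := hsq
    refine ⟨⟨x, 1, 1, 1⟩, fun h => one_ne_zero (congrArg QuaternionAlgebra.imI h), ?_⟩
    rw [normSq_mk]
    linear_combination -hx
  let b : Kˣ := Units.mk0 (-3) (by norm_num)
  let x : Kˣ := Units.mk0 (-2) (by norm_num)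
  obtain ⟨S, hS₀, hS⟩ := exists_principalAway (K := K) <|
    (finite_setOf_valuation_ne_one (R := 𝓞 K) (two_ne_zero (α := K))).toFinset ∪
      (finite_setOf_valuation_ne_one (R := 𝓞 K) (three_ne_zero (α := K))).toFinset
  have hS₂ (v) (hv : v ∉ S) : v.valuation K 2 = 1 := by
    simpa using (not_or.1 (mt Finset.mem_union.2 fun h => hv (hS₀ h))).1
  have hS₃ (v) (hv : v ∉ S) : v.valuation K 3 = 1 := by
    simpa using (not_or.1 (mt Finset.mem_union.2 fun h => hv (hS₀ h))).2
  obtain ⟨α, β, h⟩ : x ∈ normGroup (b : K) :=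
    mem_normGroup_of_forall_mem_evenValuation hS₂ hS
      (fun v hv => by simpa [b, Valuation.map_neg] using hS₃ v hv) hsq
      (fun v _ => normGroup_le_evenValuation_of_eq_neg_three (h₃ v) rfl)
      (fun v hv => by simpa [x, Valuation.map_neg] using hS₂ v hv)
      (fun v _ _ => by simpa [x, mem_evenValuation, Valuation.map_neg] using h₂ v)
  replace h : -2 = α ^ 2 + 3 * β ^ 2 := by simpa [b, x] using h
  refine ⟨⟨α, β + 1, β - 1, β⟩, fun hz => ?_, ?_⟩
  · have hI : β + 1 = 0 := congrArg QuaternionAlgebra.imI hz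
    have hK : β = 0 := congrArg QuaternionAlgebra.imK hz
    simp [hK] at hI
  · rw [normSq_mk]
    linear_combination -h

end GlobalNorm

/-! ### Sums of four squares in number fields -/

section NumberFields

open IsDedekindDomain NumberField Quaternion

lemma SqrtExtension.mem_range_normSq {K L : Type*} [Field K] [NeZero (2 : K)] [Field L]
    [Algebra K L] {d : K} (q : SqrtExtension K L (-d)) (hd : ¬ IsSquare (-d))
    (h : ∃ z : ℍ[L], z ≠ 0 ∧ normSq z = 0) : d ∈ Set.range (normSq : ℍ[K] → K) := by
  obtain ⟨z, hz, hz₀⟩ := h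
  obtain ⟨x, y, hre, hI, hJ, hK⟩ : ∃ x y : ℍ[K],
      z.re = algebraMap K L x.re + algebraMap K L y.re * q.root ∧
      z.imI = algebraMap K L x.imI + algebraMap K L y.imI * q.root ∧
      z.imJ = algebraMap K L x.imJ + algebraMap K L y.imJ * q.root ∧
      z.imK = algebraMap K L x.imK + algebraMap K L y.imK * q.root := by
    choose a b h using q.exists_eq_add_mul_root
    exact ⟨⟨a z.re, a z.imI, a z.imJ, a z.imK⟩, ⟨b z.re, b z.imI, b z.imJ, b z.imK⟩,
      h _, h _, h _, h _⟩
  let A := normSq x - d * normSq y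
  let B := 2 * (x.re * y.re + x.imI * y.imI + x.imJ * y.imJ + x.imK * y.imK)
  have hAB : algebraMap K L A = -(algebraMap K L B * q.root) := by
    rw [normSq_def', hre, hI, hJ, hK] at hz₀
    simp only [A, B, normSq_def', map_sub, map_add, map_mul, map_pow, map_ofNat]
    have hroot := q.root_sq
    rw [map_neg] at hroot
    linear_combination hz₀ - (algebraMap K L y.re ^ 2 + algebraMap K L y.imI ^ 2 +
      algebraMap K L y.imJ ^ 2 + algebraMap K L y.imK ^ 2) * hroot
  have hsq : A ^ 2 = B ^ 2 * -d := by
    apply (algebraMap K L).injective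
    rw [map_pow, hAB, map_mul _ (B ^ 2), ← q.root_sq, map_pow, neg_sq, mul_pow]
  have hB : B = 0 := by
    by_contra hB
    exact hd ⟨A / B, by field_simp; linear_combination -hsq⟩
  have hA : A = 0 := by simpa [hB] using hsq
  refine mem_range_normSq_of_normSq_eq_mul (x := x) (y := y) ?_ (sub_eq_zero.1 hA)
  contrapose! hz
  obtain ⟨rfl, rfl⟩ := hz
  ext <;> simp [hre, hI, hJ, hK]

section Extension

variable {K L : Type*} [Field K] [Field L] {f : K →+* L}

lemma isTotallyComplex_of_sq_eq_map_neg {d : K} (hd₀ : d ≠ 0) (hd : IsSumSq d) {r : L}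
    (hr : r ^ 2 = f (-d)) : IsTotallyComplex L where
  isComplex w := by
    rw [← InfinitePlace.not_isReal_iff_isComplex]
    intro hw
    let φ : L →+* ℝ := InfinitePlace.embedding_of_isReal hw
    have hpos : 0 < φ (f d) :=
      (isSumSq_map (φ.comp f) hd).nonneg.lt_of_ne' ((map_ne_zero (φ.comp f)).2 hd₀)
    have hsq : φ r ^ 2 = -φ (f d) := by rw [← map_pow, hr, map_neg, map_neg]
    nlinarith only [hpos, hsq, sq_nonneg (φ r)]

variable [NumberField K] [NumberField L]

lemma isSquare_valuation_map {w : HeightOneSpectrum (𝓞 L)} {x : K}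
    (hx : IsSquare ((primeBelow f w).valuation K x)) : IsSquare (w.valuation L (f x)) := by
  obtain ⟨e, -, he⟩ := exists_valuation_primeBelow_pow_eq f w
  exact he x ▸ hx.pow e

lemma isSquare_valuation_map_of_imp {w : HeightOneSpectrum (𝓞 L)} {c d : K} (hc₀ : c ≠ 0)
    (hd₀ : d ≠ 0) {r : L} (hr : r ^ 2 = f (-d))
    (h : IsSquare ((primeBelow f w).valuation K d) → IsSquare ((primeBelow f w).valuation K c)) :
    IsSquare (w.valuation L (f c)) := by
  by_cases hc : IsSquare ((primeBelow f w).valuation K c)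
  · exact isSquare_valuation_map hc
  have hcd : IsSquare ((primeBelow f w).valuation K (c * d)) :=
    (mul_mem_evenValuation_iff (x := Units.mk0 c hc₀) (y := Units.mk0 d hd₀)).2
      (iff_of_false hc (mt h hc))
  have hd : IsSquare (w.valuation L (f d)) := by
    rw [← Valuation.map_neg, ← map_neg, ← hr]
    exact isSquare_valuation_sq r
  rw [← mul_div_cancel_right₀ c hd₀, map_div₀, map_div₀]
  exact (isSquare_valuation_map hcd).div hd

lemma exists_normSq_eq_zero_of_sq_eq_map_neg (f : K →+* L) {d : K} (hd₀ : d ≠ 0) (hd : IsSumSq d)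
    (h : ∀ v : HeightOneSpectrum (𝓞 K), IsSquare (v.valuation K d) →
      IsSquare (v.valuation K 2) ∧ IsSquare (v.valuation K 3))
    {r : L} (hr : r ^ 2 = f (-d)) : ∃ z : ℍ[L], z ≠ 0 ∧ normSq z = 0 := by
  have := isTotallyComplex_of_sq_eq_map_neg hd₀ hd hr
  refine exists_normSq_eq_zero_of_forall_isSquare_valuation (fun w => ?_) fun w => ?_
  · simpa only [map_ofNat] using
      isSquare_valuation_map_of_imp two_ne_zero hd₀ hr fun hw => (h (primeBelow f w) hw).1
  · simpa only [map_ofNat] using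
      isSquare_valuation_map_of_imp three_ne_zero hd₀ hr fun hw => (h (primeBelow f w) hw).2

lemma mem_range_normSq_of_forall_isSquare {d : K} (hd₀ : d ≠ 0) (hd : IsSumSq d)
    (h : ∀ v : HeightOneSpectrum (𝓞 K), IsSquare (v.valuation K d) →
      IsSquare (v.valuation K 2) ∧ IsSquare (v.valuation K 3)) :
    d ∈ Set.range (normSq : ℍ[K] → K) := by
  by_cases hsq : IsSquare (-d)
  · obtain ⟨r, hr⟩ := hsq
    exact normSq_surjective_of_exists_eq_zero
      (exists_normSq_eq_zero_of_sq_eq_map_neg (RingHom.id K) hd₀ hd h ((sq r).trans hr.symm)) d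
  · obtain ⟨L, _, _, _, ⟨q⟩⟩ := exists_numberField_sqrtExtension hsq
    exact q.mem_range_normSq hsq
      (exists_normSq_eq_zero_of_sq_eq_map_neg (algebraMap K L) hd₀ hd h q.root_sq)

end Extension

lemma exists_isSquare_valuation_mul_imp {K Γ₀ : Type*} [Field K]
    [LinearOrderedCommGroupWithZero Γ₀] (v : Valuation K Γ₀) {a : K} (ha : a ≠ 0) :
    ∃ m n : ℕ, v 6 ≤ v (1 + m ^ 2 + n ^ 2) ∧
      (IsSquare (v (a * (1 + m ^ 2 + n ^ 2))) → IsSquare (v 2) ∧ IsSquare (v 3)) := by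
  have h₂ : v 2 ≤ 1 := valuation_two_le_one v
  have h₃ : v 3 ≤ 1 := by exact_mod_cast valuation_natCast_le_one v 3
  have h₆ : v 6 = v 2 * v 3 := by
    rw [← map_mul]
    norm_num
  have hcancel {s t : K} (hva : IsSquare (v a)) (has : IsSquare (v (a * s))) (hst : s = t) :
      IsSquare (v t) := by
    rw [← hst, ← mul_div_cancel_left₀ s ha, map_div₀]
    exact has.div hva
  by_cases hva : IsSquare (v a)
  · by_cases hv₂ : IsSquare (v 2)
    · refine ⟨1, 1, ?_, fun hs => ⟨hv₂, hcancel hva hs (by norm_num)⟩⟩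
      norm_num [h₆, mul_le_of_le_one_left' h₂]
    · refine ⟨1, 0, ?_, fun hs => absurd (hcancel hva hs (by norm_num)) hv₂⟩
      norm_num [h₆, mul_le_of_le_one_right' h₃]
  · refine ⟨0, 0, ?_, fun hs => absurd (by simpa using hs) hva⟩
    simpa [h₆] using mul_le_one' h₂ h₃

variable {K : Type*} [Field K] [NumberField K]

lemma exists_exp_neg_lt_valuation (v : HeightOneSpectrum (𝓞 K)) {x : K} (hx : x ≠ 0) :
    ∃ k : ℕ, WithZero.exp (-(k : ℤ)) < v.valuation K x := by
  refine ⟨(-WithZero.log (v.valuation K x)).toNat + 1, ?_⟩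
  rw [← WithZero.lt_log_iff_exp_lt ((v.valuation K).ne_zero_iff.2 hx)]
  lia

lemma valuation_one_add_sq_add_sq_congr (v : HeightOneSpectrum (𝓞 K)) {k : ℕ} {y z m n : 𝓞 K}
    (hy : y - m ∈ v.asIdeal ^ k) (hz : z - n ∈ v.asIdeal ^ k)
    (hk : WithZero.exp (-(k : ℤ)) < v.valuation K (1 + (m : K) ^ 2 + (n : K) ^ 2)) :
    v.valuation K (1 + (y : K) ^ 2 + (z : K) ^ 2) =
      v.valuation K (1 + (m : K) ^ 2 + (n : K) ^ 2) := by
  have hsub : y ^ 2 - m ^ 2 + (z ^ 2 - n ^ 2) ∈ v.asIdeal ^ k := by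
    rw [sq_sub_sq, sq_sub_sq]
    exact add_mem (Ideal.mul_mem_left _ _ hy) (Ideal.mul_mem_left _ _ hz)
  have hlt := ((valuation_algebraMap_le_exp_iff (K := K) v _ _).2 hsub).trans_lt hk
  rw [← Valuation.map_add_eq_of_lt_left _ hlt]
  simp only [map_add, map_sub, map_pow]
  ring_nf

lemma exists_forall_isSquare_valuation_mul_imp {a : K} (ha : a ≠ 0) :
    ∃ y z : K, ∀ v : HeightOneSpectrum (𝓞 K),
      IsSquare (v.valuation K (a * (1 + y ^ 2 + z ^ 2))) →
        IsSquare (v.valuation K 2) ∧ IsSquare (v.valuation K 3) := by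
  have hfin := (finite_setOf_valuation_ne_one (R := 𝓞 K) (two_ne_zero (α := K))).union
    (finite_setOf_valuation_ne_one (R := 𝓞 K) (three_ne_zero (α := K)))
  choose m n h₆ h using fun v : HeightOneSpectrum (𝓞 K) =>
    exists_isSquare_valuation_mul_imp (v.valuation K) ha
  choose k hk using fun v : HeightOneSpectrum (𝓞 K) =>
    exists_exp_neg_lt_valuation v (x := (6 : K)) (by norm_num)
  obtain ⟨y, hy⟩ := exists_forall_sub_mem_pow hfin.toFinset k fun v => m v
  obtain ⟨z, hz⟩ := exists_forall_sub_mem_pow hfin.toFinset k fun v => n v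
  refine ⟨y, z, fun v hv => ?_⟩
  by_cases hvS : v ∈ hfin.toFinset
  · have hval := valuation_one_add_sq_add_sq_congr v (hy v hvS) (hz v hvS) <| by
      simpa only [map_natCast] using (hk v).trans_le (h₆ v)
    refine h v ?_
    simpa only [map_mul, hval, map_natCast] using hv
  · rw [Set.Finite.mem_toFinset, Set.mem_union, not_or] at hvS
    simp only [Set.mem_ofPred_eq, not_not] at hvS
    rw [hvS.1, hvS.2]
    exact ⟨IsSquare.one, IsSquare.one⟩

theorem mem_range_normSq_of_isSumSq {a : K} (ha : IsSumSq a) :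
    a ∈ Set.range (normSq : ℍ[K] → K) := by
  rcases eq_or_ne a 0 with rfl | ha₀
  · exact ⟨0, map_zero _⟩
  obtain ⟨y, z, h⟩ := exists_forall_isSquare_valuation_mul_imp ha₀
  have hs : normSq (⟨1, y, z, 0⟩ : ℍ[K]) = 1 + y ^ 2 + z ^ 2 := by simp [normSq_mk]
  by_cases hs₀ : 1 + y ^ 2 + z ^ 2 = 0
  · exact normSq_surjective_of_exists_eq_zero
      ⟨⟨1, y, z, 0⟩, fun h => one_ne_zero (congrArg QuaternionAlgebra.re h), hs.trans hs₀⟩ a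
  have hsq : IsSumSq (1 + y ^ 2 + z ^ 2) := by
    rw [sq, sq]
    exact (IsSumSq.one.add (.mul_self y)).add (.mul_self z)
  rw [← mul_div_cancel_right₀ a hs₀]
  exact div_mem_range_normSq
    (mem_range_normSq_of_forall_isSquare (mul_ne_zero ha₀ hs₀) (ha.mul hsq) h) ⟨_, hs⟩

theorem exists_eq_sum_four_sq_of_isSumSq {H : Type*} [Field H] [Algebra ℚ H]
    [Algebra.IsAlgebraic ℚ H] {x : H} (hx : IsSumSq x) :
    ∃ x₁ x₂ x₃ x₄ : H, x = x₁ ^ 2 + x₂ ^ 2 + x₃ ^ 2 + x₄ ^ 2 := by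
  obtain ⟨E, y, hE, rfl, hy⟩ := exists_finiteDimensional_isSumSq (F := ℚ) hx
  let _ : Algebra ℚ E := E.algebra'
  have : NumberField E := .of_module_finite ℚ E
  obtain ⟨q, hq⟩ := mem_range_normSq_of_isSumSq hy
  refine ⟨q.re, q.imI, q.imJ, q.imK, ?_⟩
  rw [← hq, normSq_def']
  push_cast
  rfl

end NumberFields

end FourSquares

/-- Lemma `always non-negative`: for any algebraic extension `H` of `ℚ`, the set of sums of
four squares in `H` is exactly the set of elements that are nonnegative under every
real embedding of `H`. -/
theorem sum_of_four_squares_iff_nonneg_at_all_real_embeddings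
    (H : Type*) [Field H] [Algebra ℚ H] [Algebra.IsAlgebraic ℚ H] :
    {x : H | ∃ x₁ x₂ x₃ x₄ : H, x = x₁ ^ 2 + x₂ ^ 2 + x₃ ^ 2 + x₄ ^ 2} =
      {x : H | ∀ σ : H →+* ℝ, 0 ≤ σ x} := by
  ext x
  constructor
  · rintro ⟨a, b, c, d, rfl⟩ σ
    simp only [map_add, map_pow]
    positivity
  · exact fun hx => FourSquares.exists_eq_sum_four_sq_of_isSumSq
      (FourSquares.isSumSq_of_forall_real_embedding_nonneg hx)
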